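/- Let {A',A''} be a nontrivial partition of A and let Γ ⊆ S satisfy A' ⊆ int Γ, A'' ⊆ int(S∖Γ), and Π(a, int Γ) = Π(a, cl Γ) for every a ∈ A'' with ρ(a) ≥ Φ_ρ(A'', int Γ). If Φ_ρ(A'', int Γ) > Φ_ρ(A', cl(S∖Γ)), then there exist x̂ ∈ ∂Γ and ã, â ∈ A'' such that Π(x̂,ã) = 1, Π(â,x̂) = Π(â, cl Γ), ρ(x̂) = ρ(â)·Π(â,x̂) = Φ_ρ(A'', int Γ) = Φ_ρ(int(S∖Γ), int Γ) = Φ_ρ(cl Γ, cl(S∖Γ)), and ρ(x̂) = sup_{x∈∂Γ} ρ(x). -/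

import Mathlib

open Filter Topology Metric Set MeasureTheory
open scoped NNReal

noncomputable section

/-- A deviability density on a topological space `E`. -/
def IsDeviabilityDensity {E : Type*} [TopologicalSpace E] (p : E → ℝ) : Prop :=
  (∀ x, p x ∈ Set.Icc (0:ℝ) 1) ∧ (⨆ x, p x) = 1 ∧
    ∀ γ ∈ Set.Ioc (0:ℝ) 1, IsCompact {x | γ ≤ p x}

variable {S : Type*} [MetricSpace S]

/-- Time shift `θ_s` on continuous paths. -/
def pshift (s : ℝ≥0) (X : C(ℝ≥0, S)) : C(ℝ≥0, S) :=
  ⟨fun t => X (s + t), X.continuous.comp (continuous_const.add continuous_id)⟩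

/-- `Π_{x,t}(y)`. -/
def transDen (Px : S → C(ℝ≥0, S) → ℝ) (x : S) (t : ℝ≥0) (y : S) : ℝ :=
  ⨆ X ∈ {X : C(ℝ≥0, S) | X t = y}, Px x X

/-- The standing assumptions (2.2)--(2.5) of the paper, together with the basic
assumptions on the family of path deviability densities `Px` and the set `A`. -/
structure DevSetup (S : Type*) [MetricSpace S] (Px : S → C(ℝ≥0, S) → ℝ) (A : Set S) :
    Prop where
  dev : ∀ x, IsDeviabilityDensity (Px x)
  start : ∀ x (X : C(ℝ≥0, S)), X 0 ≠ x → Px x X = 0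
  /-- (2.2) upper semicontinuity -/
  usc : UpperSemicontinuous (fun q : S × C(ℝ≥0, S) => Px q.1 q.2)
  /-- (2.2) uniform upper compactness -/
  cpt : ∀ K : Set S, IsCompact K → ∀ γ ∈ Set.Ioc (0:ℝ) 1,
    IsCompact (⋃ x ∈ K, {X : C(ℝ≥0, S) | γ ≤ Px x X})
  /-- (2.3) the maxitive Markov property -/
  markov : ∀ x (X : C(ℝ≥0, S)) (s : ℝ≥0),
    Px x X = (⨆ X' ∈ {X' : C(ℝ≥0, S) | ∀ u ≤ s, X' u = X u}, Px x X') *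
      Px (X s) (pshift s X)
  /-- (2.4) `A` is locally finite -/
  locFin : ∀ K : Set S, IsCompact K → (K ∩ A).Finite
  /-- (2.4)(i) -/
  attract : ∀ x (X : C(ℝ≥0, S)), Px x X = 1 → (⨅ t : ℝ≥0, infDist (X t) A) = 0
  /-- (2.4)(ii) -/
  equil : ∀ a ∈ A, Px a (ContinuousMap.const ℝ≥0 a) = 1
  /-- (2.4)(iii) -/
  connect : ∀ a ∈ A, ∀ a' ∈ A, ∃ t : ℝ≥0, 0 < t ∧ 0 < transDen Px a t a'
  /-- (2.4)(iv) -/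
  nearA : ∀ ε : ℝ, 0 < ε → ∃ δ : ℝ, 0 < δ ∧ ∀ x : S, infDist x A < δ →
    ∃ s₀ s₁ : ℝ≥0, 0 < s₀ ∧ 0 < s₁ ∧ ∃ a ∈ A,
      1 - ε < transDen Px x s₀ a ∧ 1 - ε < transDen Px a s₁ x
  /-- (2.4)(v) -/
  localMove : ∀ x : S, ∀ ε : ℝ, 0 < ε → ∃ δ : ℝ, 0 < δ ∧ ∃ t₀ t₁ : ℝ≥0,
    ∀ x' : S, dist x x' < δ →
      1 - ε < transDen Px x t₀ x' ∧ 1 - ε < transDen Px x' t₁ x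
  /-- (2.5) uniform tightness -/
  tight : ∀ K₁ : Set S, IsCompact K₁ → ∀ ε : ℝ, 0 < ε → ∃ K₂ : Set S, IsCompact K₂ ∧
    Filter.limsup (fun t : ℝ≥0 => ⨆ x ∈ K₁, ⨆ y ∈ K₂ᶜ, transDen Px x t y) atTop < ε

/-- LD convergence at the given rate of a sequence of Borel probability measures to a
deviability density. -/
def LDConv {E : Type*} [TopologicalSpace E] [MeasurableSpace E]
    (Q : ℕ → Measure E) (rate : ℕ → ℕ) (p : E → ℝ) : Prop :=
  ∀ f : E → ℝ, Continuous f → (∀ x, 0 ≤ f x) → BddAbove (Set.range f) →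
    Tendsto (fun n => (∫ x, (f x) ^ (rate n) ∂(Q n)) ^ ((rate n : ℝ)⁻¹)) atTop
      (𝓝 (⨆ x, f x * p x))

variable [MeasurableSpace S] [BorelSpace S]

/-- The max flux `Φ_ρ(Γ,Γ')` relative to the limiting transition density `PL`. -/
def maxFlux (PL : S → S → ℝ) (ρ : S → ℝ) (Γ Γ' : Set S) : ℝ :=
  ⨆ x ∈ Γ, ρ x * ⨆ y ∈ Γ', PL x y

/-- `Φ_ρ(Γ, x)`, the max flux into a point. -/
def maxFluxPt (PL : S → S → ℝ) (ρ : S → ℝ) (Γ : Set S) (x : S) : ℝ :=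
  ⨆ a ∈ Γ, ρ a * PL a x

/-!
An invariant measure puts as much mass on the transitions entering a set as on those leaving it. In
the LD limit this says that `ρ x * Π_{x,t}(y) ≤ ρ y`, that `ρ` is recovered from its transitions,
and that any flux from outside a set to inside is matched by a flux from its closure to the closure
of its complement. The first of these keeps a path with `ρ x * Π_x(X)` bounded below inside a
compact superlevel set of `ρ`, so within a bounded time it comes close to `A` and can be rerouted
through a point of `A` at little cost; hence `ρ y = ρ a * Π(a, y)` for some `a ∈ A` whenever
`ρ y > 0`.

Write `Φ` for the flux from `A''` into the interior of `Γ`. It is matched by a flux out of `Γ`,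
which passes through a point `a` of `A`. As the flux from `A'` is smaller than `Φ`, in fact
`a ∈ A''`, and on its way to `a` the path crosses the frontier at a point `z` with `ρ z * Π(z, a)`
arbitrarily close to `Φ`. On the other hand the boundary hypothesis gives `ρ ≤ Φ` on the frontier,
so a maximiser of `ρ z * Π(z, a)` has `ρ z = Φ` and `Π(z, a) = 1`.
-/

section Suprema

variable {ι : Type*} {s : Set ι} {f : ι → ℝ} {b c : ℝ} {i : ι}

theorem le_biSup_of_forall_le (hb : ∀ j ∈ s, f j ≤ b) (hi : i ∈ s) : f i ≤ ⨆ j ∈ s, f j :=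
  le_ciSup₂ (f := fun j (_ : j ∈ s) => f j)
    ⟨b, by rintro _ ⟨_, ⟨j, rfl⟩, hj, rfl⟩; exact hb j hj⟩ i hi

theorem biSup_le_of_forall_le (hb : 0 ≤ b) (h : ∀ j ∈ s, f j ≤ b) : ⨆ j ∈ s, f j ≤ b :=
  Real.iSup_le (fun j => Real.iSup_le (h j) hb) hb

theorem exists_lt_of_lt_biSup (hc : 0 ≤ c) (h : c < ⨆ j ∈ s, f j) : ∃ j ∈ s, c < f j := by
  contrapose! h
  exact biSup_le_of_forall_le hc h

theorem biSup_eq_of_isMaxOn (hi : i ∈ s) (h0 : 0 ≤ f i) (hmax : IsMaxOn f s i) :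
    ⨆ j ∈ s, f j = f i :=
  le_antisymm (biSup_le_of_forall_le h0 hmax) (le_biSup_of_forall_le hmax hi)

end Suprema

namespace IsDeviabilityDensity

variable {E F : Type*} [TopologicalSpace E] [TopologicalSpace F] {p f : E → ℝ} {s : Set E}

theorem nonneg (hp : IsDeviabilityDensity p) (x : E) : 0 ≤ p x := (hp.1 x).1

theorem le_one (hp : IsDeviabilityDensity p) (x : E) : p x ≤ 1 := (hp.1 x).2

theorem isCompact_superlevel (hp : IsDeviabilityDensity p) {c : ℝ} (hc : 0 < c) :
    IsCompact {x | c ≤ p x} := by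
  rcases le_or_gt c 1 with hc1 | hc1
  · exact hp.2.2 c ⟨hc, hc1⟩
  · convert isCompact_empty
    exact eq_empty_of_forall_notMem fun x hx => (hc1.trans_le hx).not_ge (hp.le_one x)

theorem upperSemicontinuous [T2Space E] (hp : IsDeviabilityDensity p) :
    UpperSemicontinuous p := by
  refine upperSemicontinuous_iff_isClosed_preimage.2 fun c => ?_
  rcases le_or_gt c 0 with hc | hc
  · convert isClosed_univ
    exact eq_univ_of_forall fun x => hc.trans (hp.nonneg x)
  · exact (hp.isCompact_superlevel hc).isClosed

theorem exists_isMaxOn_of_forall_isCompact (hp : IsDeviabilityDensity p) (hs : s.Nonempty)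
    (hfp : ∀ x ∈ s, f x ∈ Icc 0 (p x))
    (hmax : ∀ K, IsCompact K → (K ∩ s).Nonempty → ∃ x ∈ K ∩ s, IsMaxOn f (K ∩ s) x) :
    ∃ x ∈ s, IsMaxOn f s x := by
  by_cases hzero : ∀ x ∈ s, f x = 0
  · obtain ⟨x, hx⟩ := hs
    exact ⟨x, hx, fun y hy => ((hzero y hy).trans (hzero x hx).symm).le⟩
  push Not at hzero
  obtain ⟨x, hx, hne⟩ := hzero
  have hpos : 0 < f x := (hfp x hx).1.lt_of_ne' hne
  obtain ⟨z, hz, hzmax⟩ := hmax _ (hp.isCompact_superlevel hpos) ⟨x, (hfp x hx).2, hx⟩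
  refine ⟨z, hz.2, fun y hy => ?_⟩
  rcases le_total (f y) (f x) with hyx | hxy
  · exact hyx.trans (hzmax ⟨(hfp x hx).2, hx⟩)
  · exact hzmax ⟨hxy.trans (hfp y hy).2, hy⟩

theorem exists_isMaxOn_of_isClosed (hp : IsDeviabilityDensity p) (hsc : IsClosed s)
    (hs : s.Nonempty) (hfp : ∀ x ∈ s, f x ∈ Icc 0 (p x)) (hf : UpperSemicontinuousOn f s) :
    ∃ x ∈ s, IsMaxOn f s x :=
  hp.exists_isMaxOn_of_forall_isCompact hs hfp fun _ hK hKs =>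
    (hf.mono inter_subset_right).exists_isMaxOn hKs (hK.inter_right hsc)

theorem exists_isMaxOn_of_forall_finite (hp : IsDeviabilityDensity p)
    (hfin : ∀ K, IsCompact K → (K ∩ s).Finite) (hs : s.Nonempty)
    (hfp : ∀ x ∈ s, f x ∈ Icc 0 (p x)) : ∃ x ∈ s, IsMaxOn f s x :=
  hp.exists_isMaxOn_of_forall_isCompact hs hfp fun K hK hKs =>
    exists_max_image (K ∩ s) f (hfin K hK) hKs

theorem exists_eq_biSup_fiber [T2Space E] [T1Space F] (hp : IsDeviabilityDensity p) {g : E → F}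
    (hg : Continuous g) {y : F} (hpos : 0 < ⨆ x ∈ {x | g x = y}, p x) :
    ∃ x, g x = y ∧ p x = ⨆ x ∈ {x | g x = y}, p x := by
  obtain ⟨x₀, hx₀, -⟩ := exists_lt_of_lt_biSup le_rfl hpos
  obtain ⟨x, hx, hmax⟩ := hp.exists_isMaxOn_of_isClosed (isClosed_singleton.preimage hg) ⟨x₀, hx₀⟩
    (fun x _ => ⟨hp.nonneg x, le_rfl⟩) (hp.upperSemicontinuous.upperSemicontinuousOn _)
  exact ⟨x, hx, (biSup_eq_of_isMaxOn hx (hp.nonneg x) hmax).symm⟩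

theorem le_biSup_fiber {α : Type*} (hp : IsDeviabilityDensity p) (g : E → α) (x : E) :
    p x ≤ ⨆ x' ∈ {x' | g x' = g x}, p x' :=
  le_biSup_of_forall_le (fun x' _ => hp.le_one x') rfl

theorem map [T2Space E] [T1Space F] (hp : IsDeviabilityDensity p) {g : E → F}
    (hg : Continuous g) : IsDeviabilityDensity fun y => ⨆ x ∈ {x | g x = y}, p x := by
  have hle : ∀ y, ⨆ x ∈ {x | g x = y}, p x ≤ 1 := fun y =>
    biSup_le_of_forall_le zero_le_one fun x _ => hp.le_one x
  refine ⟨fun y => ⟨Real.iSup_nonneg fun x => Real.iSup_nonneg fun _ => hp.nonneg x, hle y⟩,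
    le_antisymm (Real.iSup_le hle zero_le_one) ?_, fun c hc => ?_⟩
  · rw [← hp.2.1]
    refine Real.iSup_le (fun x => (hp.le_biSup_fiber g x).trans ?_) ?_
    · exact le_ciSup (f := fun y => ⨆ x ∈ {x | g x = y}, p x)
        ⟨1, forall_mem_range.2 hle⟩ (g x)
    · exact Real.iSup_nonneg fun y => Real.iSup_nonneg fun x => Real.iSup_nonneg fun _ =>
        hp.nonneg x
  · convert (hp.isCompact_superlevel hc.1).image hg using 1
    ext y
    constructor
    · intro hy
      obtain ⟨x, hxy, hx⟩ := hp.exists_eq_biSup_fiber hg (hc.1.trans_le hy)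
      exact ⟨x, hy.trans hx.ge, hxy⟩
    · rintro ⟨x, hx, rfl⟩
      exact hx.trans (hp.le_biSup_fiber g x)

end IsDeviabilityDensity

theorem exists_mem_Ioo_lt_mul {b c : ℝ} (hc : 0 ≤ c) (hcb : c < b) :
    ∃ r ∈ Ioo (0 : ℝ) 1, c < r * b := by
  have hb : 0 < b := hc.trans_lt hcb
  obtain ⟨r, hcr, hr⟩ := exists_between ((div_lt_one hb).2 hcb)
  exact ⟨r, ⟨(div_nonneg hc hb.le).trans_lt hcr, hr⟩, (div_lt_iff₀ hb).1 hcr⟩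

theorem upperSemicontinuous_of_forall_eventually_mul_le {α : Type*} [TopologicalSpace α]
    {f : α → ℝ} (hf : ∀ x, 0 ≤ f x)
    (h : ∀ x, ∀ r ∈ Ioo (0 : ℝ) 1, ∀ᶠ x' in 𝓝 x, r * f x' ≤ f x) : UpperSemicontinuous f := by
  intro x c hc
  obtain ⟨r, hr, hrc⟩ := exists_mem_Ioo_lt_mul (hf x) hc
  filter_upwards [h x r hr] with x' hx'
  exact lt_of_mul_lt_mul_left (hx'.trans_lt hrc) hr.1.le

theorem upperSemicontinuous_mul {α : Type*} [TopologicalSpace α] {f g : α → ℝ}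
    (hf : UpperSemicontinuous f) (hg : UpperSemicontinuous g) (hf0 : ∀ x, 0 ≤ f x)
    (hg0 : ∀ x, 0 ≤ g x) : UpperSemicontinuous fun x => f x * g x := by
  intro x c hc
  obtain ⟨a, ha, b, hb, hab⟩ : ∃ a > f x, ∃ b > g x, a * b < c := by
    contrapose! hc
    exact le_mul_of_forall_lt₀ hc
  filter_upwards [hf x a ha, hg x b hb] with x' hfx hgx
  exact (mul_le_mul hfx.le hgx.le (hg0 x') ((hf0 x').trans hfx.le)).trans_lt hab

section MaxFlux

variable {E : Type*} {PL : E → E → ℝ} {ρ : E → ℝ} {G G' : Set E} {x y : E} {c : ℝ}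

theorem maxFlux_le (hρ : ∀ x, 0 ≤ ρ x) (hc : 0 ≤ c) (h : ∀ x ∈ G, ∀ y ∈ G', ρ x * PL x y ≤ c) :
    maxFlux PL ρ G G' ≤ c := by
  refine biSup_le_of_forall_le hc fun x hx => ?_
  simp only [Real.mul_iSup_of_nonneg (hρ x)]
  exact biSup_le_of_forall_le hc (h x hx)

theorem exists_lt_of_lt_maxFlux (hρ : ∀ x, 0 ≤ ρ x) (hc : 0 ≤ c) (h : c < maxFlux PL ρ G G') :
    ∃ x ∈ G, ∃ y ∈ G', c < ρ x * PL x y := by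
  contrapose! h
  exact maxFlux_le hρ hc h

theorem mul_biSup_le_maxFlux (hρ : ∀ x, ρ x ∈ Icc (0 : ℝ) 1) (hPL : ∀ x y, PL x y ≤ 1)
    (hx : x ∈ G) : ρ x * ⨆ y ∈ G', PL x y ≤ maxFlux PL ρ G G' :=
  le_biSup_of_forall_le (f := fun x => ρ x * ⨆ y ∈ G', PL x y) (fun z _ =>
    (mul_le_of_le_one_right (hρ z).1 (biSup_le_of_forall_le zero_le_one fun y _ => hPL z y)).trans
      (hρ z).2) hx

theorem mul_le_maxFlux (hρ : ∀ x, ρ x ∈ Icc (0 : ℝ) 1) (hPL : ∀ x y, PL x y ≤ 1)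
    (hx : x ∈ G) (hy : y ∈ G') : ρ x * PL x y ≤ maxFlux PL ρ G G' :=
  (mul_le_mul_of_nonneg_left (le_biSup_of_forall_le (fun z _ => hPL x z) hy) (hρ x).1).trans
    (mul_biSup_le_maxFlux hρ hPL hx)

end MaxFlux

section ExpRate

/-- The exponential rate of `u` is at most `c`: a root-free form of
`limsup (u n) ^ (1 / rate n) ≤ c`. -/
def ExpRateLE (rate : ℕ → ℕ) (u : ℕ → ℝ) (c : ℝ) : Prop :=
  ∀ d, c < d → ∀ᶠ n in atTop, u n ≤ d ^ rate n

/-- The exponential rate of `u` is at least `c`: a root-free form of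
`c ≤ liminf (u n) ^ (1 / rate n)`. -/
def ExpRateGE (rate : ℕ → ℕ) (u : ℕ → ℝ) (c : ℝ) : Prop :=
  ∀ d, 0 ≤ d → d < c → ∀ᶠ n in atTop, d ^ rate n ≤ u n

variable {rate : ℕ → ℕ} {u v : ℕ → ℝ} {c c' : ℝ}

theorem ExpRateLE.mono (hv : ExpRateLE rate v c) (huv : u ≤ᶠ[atTop] v) (hc : c ≤ c') :
    ExpRateLE rate u c' := fun d hd => by
  filter_upwards [hv d (hc.trans_lt hd), huv] with n hn hle using hle.trans hn

theorem ExpRateGE.mono (hu : ExpRateGE rate u c) (huv : u ≤ᶠ[atTop] v) (hc : c' ≤ c) :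
    ExpRateGE rate v c' := fun d hd0 hd => by
  filter_upwards [hu d hd0 (hd.trans_le hc), huv] with n hn hle using hn.trans hle

theorem ExpRateLE.of_forall_gt (h : ∀ d, c < d → ExpRateLE rate u d) : ExpRateLE rate u c :=
  fun d hd => by
    obtain ⟨e, hce, hed⟩ := exists_between hd
    exact h e hce d hed

theorem expRateLE_of_eventually_le_pow (hc : 0 ≤ c) (h : ∀ᶠ n in atTop, u n ≤ c ^ rate n) :
    ExpRateLE rate u c := fun d hd => by
  filter_upwards [h] with n hn using hn.trans (pow_le_pow_left₀ hc hd.le _)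

theorem ExpRateLE.add (hrate : Tendsto rate atTop atTop) (hc : 0 ≤ c) (hu : ExpRateLE rate u c)
    (hv : ExpRateLE rate v c) : ExpRateLE rate (fun n => u n + v n) c := fun d hd => by
  obtain ⟨e, hce, hed⟩ := exists_between hd
  have he : 0 < e := hc.trans_lt hce
  have htwo : ∀ᶠ n in atTop, 2 ≤ (d / e) ^ rate n :=
    ((tendsto_pow_atTop_atTop_of_one_lt ((one_lt_div he).2 hed)).comp hrate).eventually_ge_atTop 2
  filter_upwards [hu e hce, hv e hce, htwo] with n hun hvn hn
  calc u n + v n ≤ 2 * e ^ rate n := by linarith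
    _ ≤ (d / e) ^ rate n * e ^ rate n := by gcongr
    _ = d ^ rate n := by rw [← mul_pow, div_mul_cancel₀ _ he.ne']

theorem ExpRateGE.le_of_expRateLE (hrate : Tendsto rate atTop atTop) (hc : 0 ≤ c')
    (hu : ExpRateGE rate u c) (hv : ExpRateLE rate v c') (huv : u ≤ᶠ[atTop] v) : c ≤ c' := by
  by_contra! hlt
  obtain ⟨d, hd, hdc⟩ := exists_between hlt
  obtain ⟨e, hde, hec⟩ := exists_between hdc
  have hd0 : 0 ≤ d := hc.trans hd.le
  obtain ⟨n, hun, hvn, hle, hn⟩ := ((hu e (hd0.trans hde.le) hec).and <| (hv d hd).and <|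
    huv.and <| hrate.eventually_ge_atTop 1).exists
  exact (pow_lt_pow_left₀ hde hd0 (Nat.one_le_iff_ne_zero.1 hn)).not_ge
    (hun.trans (hle.trans hvn))

theorem expRateLE_of_tendsto_rpow (hrate : Tendsto rate atTop atTop) (hu : ∀ n, 0 ≤ u n)
    (h : Tendsto (fun n => u n ^ (rate n : ℝ)⁻¹) atTop (𝓝 c)) : ExpRateLE rate u c :=
  fun d hd => by
    filter_upwards [h.eventually_lt_const hd, hrate.eventually_ge_atTop 1] with n hn hrn
    rw [← Real.rpow_inv_natCast_pow (hu n) (Nat.one_le_iff_ne_zero.1 hrn)]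
    exact pow_le_pow_left₀ (Real.rpow_nonneg (hu n) _) hn.le _

theorem expRateGE_of_tendsto_rpow (hrate : Tendsto rate atTop atTop) (hu : ∀ n, 0 ≤ u n)
    (h : Tendsto (fun n => u n ^ (rate n : ℝ)⁻¹) atTop (𝓝 c)) : ExpRateGE rate u c :=
  fun d hd0 hd => by
    filter_upwards [h.eventually_const_lt hd, hrate.eventually_ge_atTop 1] with n hn hrn
    rw [← Real.rpow_inv_natCast_pow (hu n) (Nat.one_le_iff_ne_zero.1 hrn)]
    exact pow_le_pow_left₀ hd0 hn.le _

end ExpRate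

theorem integrable_pow_of_forall_mem_Icc {E : Type*} [TopologicalSpace E] [MeasurableSpace E]
    [OpensMeasurableSpace E] {μ : Measure E} [IsFiniteMeasure μ] {f : E → ℝ} (hf : Continuous f)
    (hf01 : ∀ x, f x ∈ Icc (0 : ℝ) 1) (n : ℕ) : Integrable (fun x => f x ^ n) μ :=
  Integrable.of_mem_Icc 0 1 (hf.pow n).measurable.aemeasurable <| .of_forall fun x =>
    ⟨pow_nonneg (hf01 x).1 n, pow_le_one₀ (hf01 x).1 (hf01 x).2⟩

namespace LDConv

variable {E : Type*} [TopologicalSpace E] [MeasurableSpace E] {Q : ℕ → Measure E}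
  {rate : ℕ → ℕ} {p f : E → ℝ} {s : Set E} {c : ℝ} {x : E}

theorem expRateLE_integral_pow (h : LDConv Q rate p) (hrate : Tendsto rate atTop atTop)
    (hf : Continuous f) (hf01 : ∀ x, f x ∈ Icc (0 : ℝ) 1) (hc : 0 ≤ c)
    (hfp : ∀ x, f x * p x ≤ c) :
    ExpRateLE rate (fun n => ∫ x, f x ^ rate n ∂Q n) c :=
  (expRateLE_of_tendsto_rpow hrate
    (fun _ => integral_nonneg fun x => pow_nonneg (hf01 x).1 _)
    (h f hf (fun x => (hf01 x).1) ⟨1, forall_mem_range.2 fun x => (hf01 x).2⟩)).mono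
    (EventuallyLE.refl _ _) (Real.iSup_le hfp hc)

theorem expRateGE_integral_pow (h : LDConv Q rate p) (hrate : Tendsto rate atTop atTop)
    (hp : IsDeviabilityDensity p) (hf : Continuous f) (hf01 : ∀ x, f x ∈ Icc (0 : ℝ) 1) (x : E) :
    ExpRateGE rate (fun n => ∫ x, f x ^ rate n ∂Q n) (f x * p x) :=
  (expRateGE_of_tendsto_rpow hrate
    (fun _ => integral_nonneg fun x => pow_nonneg (hf01 x).1 _)
    (h f hf (fun x => (hf01 x).1) ⟨1, forall_mem_range.2 fun x => (hf01 x).2⟩)).mono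
    (EventuallyLE.refl _ _) (le_ciSup (f := fun x => f x * p x) ⟨1, forall_mem_range.2 fun x =>
      mul_le_one₀ (hf01 x).2 (hp.nonneg x) (hp.le_one x)⟩ x)

variable [OpensMeasurableSpace E] [NormalSpace E] [∀ n, IsFiniteMeasure (Q n)]

theorem expRateLE_measureReal_of_isClosed [T2Space E] (h : LDConv Q rate p)
    (hrate : Tendsto rate atTop atTop) (hp : IsDeviabilityDensity p) (hs : IsClosed s)
    (hc : 0 ≤ c) (hpc : ∀ x ∈ s, p x ≤ c) : ExpRateLE rate (fun n => (Q n).real s) c := by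
  refine ExpRateLE.of_forall_gt fun d hd => ?_
  have hd0 : 0 < d := hc.trans_lt hd
  have hdisj : Disjoint {x | d ≤ p x} s :=
    disjoint_left.2 fun x hx hxs => (hd.trans_le hx).not_ge (hpc x hxs)
  obtain ⟨f, hf0, hf1, hf01⟩ := exists_continuous_zero_one_of_isClosed
    (hp.isCompact_superlevel hd0).isClosed hs hdisj
  have hfp : ∀ x, f x * p x ≤ d := fun x => by
    rcases le_or_gt d (p x) with hx | hx
    · simpa only [hf0 hx, Pi.zero_apply, zero_mul] using hd0.le
    · exact (mul_le_of_le_one_left (hp.nonneg x) (hf01 x).2).trans hx.le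
  refine (h.expRateLE_integral_pow hrate f.continuous hf01 hd0.le hfp).mono
    (.of_forall fun n => ?_) le_rfl
  change (Q n).real s ≤ ∫ x, f x ^ rate n ∂Q n
  rw [← integral_indicator_one hs.measurableSet]
  refine integral_mono ((integrable_const 1).indicator hs.measurableSet)
    (integrable_pow_of_forall_mem_Icc f.continuous hf01 _)
    (indicator_le' (fun x hx => ?_) fun x _ =>
      pow_nonneg (hf01 x).1 _)
  simp only [hf1 hx, Pi.one_apply, one_pow, le_refl]

theorem expRateGE_measureReal_of_isOpen [T1Space E] (h : LDConv Q rate p)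
    (hrate : Tendsto rate atTop atTop) (hp : IsDeviabilityDensity p) (hs : IsOpen s)
    (hx : x ∈ s) : ExpRateGE rate (fun n => (Q n).real s) (p x) := by
  obtain ⟨f, hf0, hf1, hf01⟩ := exists_continuous_zero_one_of_isClosed hs.isClosed_compl
    (isClosed_singleton (x := x)) (disjoint_singleton_right.2 (notMem_compl_iff.2 hx))
  have hfx : f x * p x = p x := by rw [hf1 rfl, Pi.one_apply, one_mul]
  refine (h.expRateGE_integral_pow hrate hp f.continuous hf01 x).mono ?_ hfx.ge
  filter_upwards [hrate.eventually_ge_atTop 1] with n hn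
  change ∫ x, f x ^ rate n ∂Q n ≤ (Q n).real s
  rw [← integral_indicator_one hs.measurableSet]
  refine integral_mono (integrable_pow_of_forall_mem_Icc f.continuous hf01 _)
    ((integrable_const 1).indicator hs.measurableSet) (le_indicator (fun y _ =>
      pow_le_one₀ (hf01 y).1 (hf01 y).2) fun y hy => ?_)
  simp only [hf0 hy, Pi.zero_apply, zero_pow (Nat.one_le_iff_ne_zero.1 hn), le_refl]

theorem exists_mem_nhds_eventually_measureReal_le [T2Space E] (h : LDConv Q rate p)
    (hrate : Tendsto rate atTop atTop) (hp : IsDeviabilityDensity p) (hx : p x < c) :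
    ∃ V ∈ 𝓝 x, ∀ᶠ n in atTop, (Q n).real V ≤ c ^ rate n := by
  obtain ⟨d, hxd, hdc⟩ := exists_between hx
  obtain ⟨V, hV, hVc, hVd⟩ := exists_mem_nhds_isClosed_subset (hp.upperSemicontinuous x d hxd)
  exact ⟨V, hV, h.expRateLE_measureReal_of_isClosed hrate hp hVc ((hp.nonneg x).trans hxd.le)
    (fun y hy => (hVd hy).le) c hdc⟩

end LDConv

theorem eventually_prod_nhds_of_forall_tendsto {E : Type*} [TopologicalSpace E]
    [FirstCountableTopology E] {R : ℕ → E → Prop} {x : E}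
    (h : ∀ xs : ℕ → E, Tendsto xs atTop (𝓝 x) → ∀ᶠ n in atTop, R n (xs n)) :
    ∀ᶠ p in atTop ×ˢ 𝓝 x, R p.1 p.2 := by
  by_contra hcon
  obtain ⟨w, hw, hwR⟩ := exists_seq_forall_of_frequently (not_eventually.1 hcon)
  obtain ⟨ψ, hψ, hψw⟩ := strictMono_subseq_of_tendsto_atTop (tendsto_fst.comp hw)
  set N : ℕ → ℕ := fun k => (w (ψ k)).1
  set z : ℕ → E := fun k => (w (ψ k)).2
  have hz : Tendsto z atTop (𝓝 x) := (tendsto_snd.comp hw).comp hψ.tendsto_atTop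
  have hN : StrictMono N := hψw
  have hxs : Tendsto (Function.extend N z fun _ => x) atTop (𝓝 x) := by
    refine tendsto_def.2 fun U hU => ?_
    obtain ⟨K, hK⟩ := eventually_atTop.1 (hz.eventually_mem hU)
    filter_upwards [eventually_ge_atTop (N K)] with n hn
    by_cases hmem : ∃ k, N k = n
    · obtain ⟨k, rfl⟩ := hmem
      simpa only [mem_preimage, hN.injective.extend_apply] using hK k (hN.le_iff_le.1 hn)
    · simpa only [mem_preimage, Function.extend_apply' _ _ _ hmem] using mem_of_mem_nhds hU
  obtain ⟨k, hk⟩ := (hN.tendsto_atTop.eventually (h _ hxs)).exists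
  rw [hN.injective.extend_apply] at hk
  exact hwR (ψ k) hk

section CompProd

open ProbabilityTheory

variable {α β : Type*} [MeasurableSpace α] [MeasurableSpace β] {μ : Measure α}
  [IsFiniteMeasure μ] {κ : Kernel α β} [IsFiniteKernel κ] {s : Set α} {t : Set β} {b : ℝ}

theorem measureReal_compProd_prod_le (hs : MeasurableSet s) (ht : MeasurableSet t) (hb : 0 ≤ b)
    (h : ∀ x ∈ s, (κ x).real t ≤ b) : (μ ⊗ₘ κ).real (s ×ˢ t) ≤ b * μ.real s := by
  refine ENNReal.toReal_le_of_le_ofReal (by positivity) ?_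
  rw [Measure.compProd_apply_prod hs ht, ENNReal.ofReal_mul hb, ofReal_measureReal,
    ← setLIntegral_const]
  exact setLIntegral_mono measurable_const fun x hx =>
    (ENNReal.le_ofReal_iff_toReal_le (measure_ne_top _ _) hb).2 (h x hx)

theorem le_measureReal_compProd_prod (hs : MeasurableSet s) (ht : MeasurableSet t) (hb : 0 ≤ b)
    (h : ∀ x ∈ s, b ≤ (κ x).real t) : b * μ.real s ≤ (μ ⊗ₘ κ).real (s ×ˢ t) := by
  refine (ENNReal.ofReal_le_iff_le_toReal (measure_ne_top _ _)).1 ?_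
  rw [Measure.compProd_apply_prod hs ht, ENNReal.ofReal_mul hb, ofReal_measureReal,
    ← setLIntegral_const]
  exact setLIntegral_mono' hs fun x hx =>
    (ENNReal.ofReal_le_iff_le_toReal (measure_ne_top _ _)).2 (h x hx)

theorem measureReal_compProd_prod_univ {κ : Kernel α β} [IsMarkovKernel κ]
    (hs : MeasurableSet s) : (μ ⊗ₘ κ).real (s ×ˢ univ) = μ.real s := by
  rw [prod_univ, ← map_measureReal_apply measurable_fst hs, ← Measure.fst, Measure.fst_compProd]

theorem measureReal_compProd_univ_prod_of_invariant {κ : Kernel α α} [IsFiniteKernel κ]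
    (h : κ.Invariant μ) (hs : MeasurableSet s) : (μ ⊗ₘ κ).real (univ ×ˢ s) = μ.real s := by
  rw [univ_prod, ← map_measureReal_apply measurable_snd hs, ← Measure.snd, Measure.snd_compProd, h]

theorem measureReal_compProd_compl_prod_of_invariant {κ : Kernel α α} [IsMarkovKernel κ]
    (h : κ.Invariant μ) (hs : MeasurableSet s) :
    (μ ⊗ₘ κ).real (sᶜ ×ˢ s) = (μ ⊗ₘ κ).real (s ×ˢ sᶜ) := by
  have hin : (μ ⊗ₘ κ).real (s ×ˢ s) + (μ ⊗ₘ κ).real (sᶜ ×ˢ s) = μ.real s := by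
    rw [← measureReal_union (disjoint_compl_right.set_prod_left s s) (hs.compl.prod hs),
      ← union_prod, union_compl_self, measureReal_compProd_univ_prod_of_invariant h hs]
  have hout : (μ ⊗ₘ κ).real (s ×ˢ s) + (μ ⊗ₘ κ).real (s ×ˢ sᶜ) = μ.real s := by
    rw [← measureReal_union (disjoint_compl_right.set_prod_right s s) (hs.prod hs.compl),
      ← prod_union, union_compl_self, measureReal_compProd_prod_univ hs]
  linarith

end CompProd

section JointLaw

open ProbabilityTheory

variable {E : Type*} [MetricSpace E] [MeasurableSpace E] [BorelSpace E]

/-- The kernels `κ n` LD converge at rate `n` to the transition density `q`, continuously in the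
starting point. -/
structure IsLDLimitKernel (κ : ℕ → Kernel E E) (q : E → E → ℝ) : Prop where
  dev : ∀ x, IsDeviabilityDensity (q x)
  conv : ∀ (x : E) (xs : ℕ → E), Tendsto xs atTop (𝓝 x) →
    LDConv (fun n => κ n (xs n)) (fun n => n) (q x)

variable {κ : ℕ → Kernel E E} [∀ n, IsMarkovKernel (κ n)] {q : E → E → ℝ} {μ : ℕ → Measure E}
  [∀ n, IsProbabilityMeasure (μ n)] {rate : ℕ → ℕ} {ρ : E → ℝ} {F O F₁ F₂ O₁ O₂ : Set E} {x y : E}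
  {c d : ℝ}

namespace IsLDLimitKernel

theorem exists_mem_nhds_eventually_pow_le_kernel (hκ : IsLDLimitKernel κ q) (hO : IsOpen O)
    (hy : y ∈ O) (hd : 0 ≤ d) (hdq : d < q x y) :
    ∃ U ∈ 𝓝 x, ∀ᶠ n in atTop, ∀ x' ∈ U, d ^ n ≤ (κ n x').real O := by
  have hseq : ∀ᶠ p : ℕ × E in atTop ×ˢ 𝓝 x, d ^ p.1 ≤ (κ p.1 p.2).real O :=
    eventually_prod_nhds_of_forall_tendsto (R := fun n x' => d ^ n ≤ (κ n x').real O)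
      fun xs hxs =>
        (hκ.conv x xs hxs).expRateGE_measureReal_of_isOpen tendsto_id (hκ.dev x) hO hy d hd hdq
  obtain ⟨N, hN, U, hU, hNU⟩ := eventually_prod_iff.1 hseq
  exact ⟨{x | U x}, hU, hN.mono fun n hn x' hx' => hNU hn hx'⟩

theorem exists_mem_nhds_eventually_kernel_le_pow (hκ : IsLDLimitKernel κ q) (hF : IsClosed F)
    (hc : 0 ≤ c) (hqc : ∀ y ∈ F, q x y ≤ c) (hcd : c < d) :
    ∃ U ∈ 𝓝 x, ∀ᶠ n in atTop, ∀ x' ∈ U, (κ n x').real F ≤ d ^ n := by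
  have hseq : ∀ᶠ p : ℕ × E in atTop ×ˢ 𝓝 x, (κ p.1 p.2).real F ≤ d ^ p.1 :=
    eventually_prod_nhds_of_forall_tendsto (R := fun n x' => (κ n x').real F ≤ d ^ n)
      fun xs hxs =>
        (hκ.conv x xs hxs).expRateLE_measureReal_of_isClosed tendsto_id (hκ.dev x) hF hc hqc d hcd
  obtain ⟨N, hN, U, hU, hNU⟩ := eventually_prod_iff.1 hseq
  exact ⟨{x | U x}, hU, hN.mono fun n hn x' hx' => hNU hn hx'⟩

theorem expRateGE_compProd_prod_of_isOpen (hκ : IsLDLimitKernel κ q)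
    (hrate : Tendsto rate atTop atTop) (hρ : IsDeviabilityDensity ρ) (hμ : LDConv μ rate ρ)
    (h₁ : IsOpen O₁) (h₂ : IsOpen O₂) (hx : x ∈ O₁) (hy : y ∈ O₂) :
    ExpRateGE rate (fun k => (μ k ⊗ₘ κ (rate k)).real (O₁ ×ˢ O₂)) (ρ x * q x y) := by
  intro d hd0 hd
  obtain ⟨a, ha0, ha, b, hb0, hb, hdab⟩ : ∃ a, 0 ≤ a ∧ a < ρ x ∧ ∃ b, 0 ≤ b ∧ b < q x y ∧
      d < a * b := by
    contrapose! hd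
    exact mul_le_of_forall_lt_of_nonneg (hρ.nonneg x) hd0 hd
  obtain ⟨U, hU, hκU⟩ := hκ.exists_mem_nhds_eventually_pow_le_kernel h₂ hy hb0 hb
  have hxU : x ∈ interior U ∩ O₁ := ⟨mem_interior_iff_mem_nhds.2 hU, hx⟩
  have hopen : IsOpen (interior U ∩ O₁) := isOpen_interior.inter h₁
  filter_upwards [hμ.expRateGE_measureReal_of_isOpen hrate hρ hopen hxU a ha0 ha,
    hrate.eventually hκU] with k hμk hκk
  calc d ^ rate k ≤ (a * b) ^ rate k := pow_le_pow_left₀ hd0 hdab.le _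
    _ = b ^ rate k * a ^ rate k := by rw [mul_comm, mul_pow]
    _ ≤ b ^ rate k * (μ k).real (interior U ∩ O₁) := by gcongr
    _ ≤ (μ k ⊗ₘ κ (rate k)).real ((interior U ∩ O₁) ×ˢ O₂) :=
      le_measureReal_compProd_prod hopen.measurableSet h₂.measurableSet (by positivity)
        fun x' hx' => hκk x' (interior_subset hx'.1)
    _ ≤ (μ k ⊗ₘ κ (rate k)).real (O₁ ×ˢ O₂) :=
      measureReal_mono (prod_mono inter_subset_right subset_rfl)

theorem exists_isOpen_expRateLE_compProd_prod (hκ : IsLDLimitKernel κ q)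
    (hrate : Tendsto rate atTop atTop) (hρ : IsDeviabilityDensity ρ) (hμ : LDConv μ rate ρ)
    (hF : IsClosed F) (hc : 0 ≤ c) (hxc : ∀ y ∈ F, ρ x * q x y ≤ c) (hcd : c < d) :
    ∃ W, IsOpen W ∧ x ∈ W ∧
      ExpRateLE rate (fun k => (μ k ⊗ₘ κ (rate k)).real (W ×ˢ F)) d := by
  have hq0 : 0 ≤ ⨆ y ∈ F, q x y :=
    Real.iSup_nonneg fun y => Real.iSup_nonneg fun _ => (hκ.dev x).nonneg y
  have hsup : ρ x * ⨆ y ∈ F, q x y ≤ c := by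
    simp only [Real.mul_iSup_of_nonneg (hρ.nonneg x)]
    exact biSup_le_of_forall_le hc hxc
  obtain ⟨a, ha, b, hb, habd⟩ : ∃ a, ρ x < a ∧ ∃ b, ⨆ y ∈ F, q x y < b ∧ a * b < d := by
    contrapose! hcd
    exact (le_mul_of_forall_lt₀ hcd).trans hsup
  have ha0 : 0 ≤ a := (hρ.nonneg x).trans ha.le
  have hb0 : 0 ≤ b := hq0.trans hb.le
  obtain ⟨V, hV, hμV⟩ := hμ.exists_mem_nhds_eventually_measureReal_le hrate hρ ha
  obtain ⟨U, hU, hκU⟩ := hκ.exists_mem_nhds_eventually_kernel_le_pow hF hq0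
    (fun y hy => le_biSup_of_forall_le (fun y _ => (hκ.dev x).le_one y) hy) hb
  refine ⟨interior (V ∩ U), isOpen_interior, mem_interior_iff_mem_nhds.2 (inter_mem hV hU),
    (expRateLE_of_eventually_le_pow (mul_nonneg ha0 hb0) ?_).mono (.refl _ _) habd.le⟩
  filter_upwards [hμV, hrate.eventually hκU] with k hμk hκk
  calc (μ k ⊗ₘ κ (rate k)).real (interior (V ∩ U) ×ˢ F)
      ≤ b ^ rate k * (μ k).real (interior (V ∩ U)) :=
        measureReal_compProd_prod_le measurableSet_interior hF.measurableSet (by positivity)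
          fun x' hx' => hκk x' (interior_subset hx').2
    _ ≤ b ^ rate k * a ^ rate k := by
        gcongr
        exact (measureReal_mono fun x' hx' => (interior_subset hx').1).trans hμk
    _ = (a * b) ^ rate k := by rw [mul_comm a, mul_pow]

theorem exists_isOpen_superset_expRateLE_compProd_prod {K : Set E}
    (hκ : IsLDLimitKernel κ q) (hK : IsCompact K) (hrate : Tendsto rate atTop atTop)
    (hρ : IsDeviabilityDensity ρ) (hμ : LDConv μ rate ρ)
    (hF : IsClosed F) (hc : 0 ≤ c) (hKc : ∀ x ∈ K, ∀ y ∈ F, ρ x * q x y ≤ c) (hcd : c < d) :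
    ∃ W, IsOpen W ∧ K ⊆ W ∧
      ExpRateLE rate (fun k => (μ k ⊗ₘ κ (rate k)).real (W ×ˢ F)) d := by
  have hd : 0 ≤ d := hc.trans hcd.le
  refine hK.induction_on ⟨∅, isOpen_empty, subset_rfl, ?_⟩ ?_ ?_ fun x hx => ?_
  · refine expRateLE_of_eventually_le_pow hd (.of_forall fun k => ?_)
    simpa only [empty_prod, measureReal_empty] using pow_nonneg hd _
  · rintro s t hst ⟨W, hW, htW, hWd⟩
    exact ⟨W, hW, hst.trans htW, hWd⟩
  · rintro s t ⟨V, hV, hsV, hVd⟩ ⟨W, hW, htW, hWd⟩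
    refine ⟨V ∪ W, hV.union hW, union_subset_union hsV htW,
      (hVd.add hrate hd hWd).mono (.of_forall fun k => ?_) le_rfl⟩
    simpa only [union_prod] using measureReal_union_le _ _
  · obtain ⟨W, hW, hxW, hWd⟩ :=
      hκ.exists_isOpen_expRateLE_compProd_prod hrate hρ hμ hF hc (hKc x hx) hcd
    exact ⟨W, mem_nhdsWithin_of_mem_nhds (hW.mem_nhds hxW), W, hW, subset_rfl, hWd⟩

theorem expRateLE_compProd_prod_of_isClosed (hκ : IsLDLimitKernel κ q)
    (hrate : Tendsto rate atTop atTop) (hρ : IsDeviabilityDensity ρ) (hμ : LDConv μ rate ρ)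
    (h₁ : IsClosed F₁) (h₂ : IsClosed F₂) (hc : 0 ≤ c)
    (hF : ∀ x ∈ F₁, ∀ y ∈ F₂, ρ x * q x y ≤ c) :
    ExpRateLE rate (fun k => (μ k ⊗ₘ κ (rate k)).real (F₁ ×ˢ F₂)) c := by
  refine ExpRateLE.of_forall_gt fun d hd => ?_
  have hd0 : 0 < d := hc.trans_lt hd
  obtain ⟨W, hW, hKW, hWd⟩ := hκ.exists_isOpen_superset_expRateLE_compProd_prod
    ((hρ.isCompact_superlevel hd0).inter_right h₁) hrate hρ hμ h₂ hc
    (fun x hx => hF x hx.2) hd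
  have hrest : ExpRateLE rate (fun k => (μ k).real (F₁ \ W)) d :=
    hμ.expRateLE_measureReal_of_isClosed hrate hρ (h₁.sdiff hW) hd0.le fun x hx =>
      (not_le.1 fun hle => hx.2 (hKW ⟨hle, hx.1⟩)).le
  refine (hWd.add hrate hd0.le hrest).mono (.of_forall fun k => ?_) le_rfl
  calc (μ k ⊗ₘ κ (rate k)).real (F₁ ×ˢ F₂)
      ≤ (μ k ⊗ₘ κ (rate k)).real (W ×ˢ F₂ ∪ (F₁ \ W) ×ˢ univ) :=
        measureReal_mono fun z hz =>
          (em (z.1 ∈ W)).imp (fun h => ⟨h, hz.2⟩) fun h => ⟨⟨hz.1, h⟩, trivial⟩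
    _ ≤ (μ k ⊗ₘ κ (rate k)).real (W ×ˢ F₂) + (μ k ⊗ₘ κ (rate k)).real ((F₁ \ W) ×ˢ univ) :=
        measureReal_union_le _ _
    _ ≤ (μ k ⊗ₘ κ (rate k)).real (W ×ˢ F₂) + (μ k).real (F₁ \ W) := by
        rw [measureReal_compProd_prod_univ (h₁.sdiff hW).measurableSet]

theorem mul_le_of_invariant (hκ : IsLDLimitKernel κ q) (hrate : Tendsto rate atTop atTop)
    (hρ : IsDeviabilityDensity ρ) (hμ : LDConv μ rate ρ)
    (hinv : ∀ k, (κ (rate k)).Invariant (μ k)) (x y : E) : ρ x * q x y ≤ ρ y := by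
  refine le_of_forall_gt_imp_ge_of_dense fun c hc => ?_
  have hc0 : 0 ≤ c := (hρ.nonneg y).trans hc.le
  obtain ⟨V, hV, hVc, hVlt⟩ := exists_mem_nhds_isClosed_subset (hρ.upperSemicontinuous y c hc)
  have hlower := hκ.expRateGE_compProd_prod_of_isOpen hrate hρ hμ isOpen_univ isOpen_interior
    (mem_univ x) (mem_interior_iff_mem_nhds.2 hV)
  have hupper : ExpRateLE rate (fun k => (μ k).real V) c :=
    hμ.expRateLE_measureReal_of_isClosed hrate hρ hVc hc0 fun z hz => (hVlt hz).le
  refine hlower.le_of_expRateLE hrate hc0 hupper (.of_forall fun k => ?_)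
  calc (μ k ⊗ₘ κ (rate k)).real (univ ×ˢ interior V)
      ≤ (μ k ⊗ₘ κ (rate k)).real (univ ×ˢ V) :=
        measureReal_mono (prod_mono subset_rfl interior_subset)
    _ = (μ k).real V := measureReal_compProd_univ_prod_of_invariant (hinv k) hVc.measurableSet

theorem exists_lt_mul_of_invariant {U : Set E} (hκ : IsLDLimitKernel κ q)
    (hrate : Tendsto rate atTop atTop) (hρ : IsDeviabilityDensity ρ) (hμ : LDConv μ rate ρ)
    (hinv : ∀ k, (κ (rate k)).Invariant (μ k)) (hU : U ∈ 𝓝 y) (hc : 0 ≤ c) (hcy : c < ρ y) :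
    ∃ x, ∃ y' ∈ U, c < ρ x * q x y' := by
  by_contra! hle
  obtain ⟨V, hV, hVc, hVU⟩ := exists_mem_nhds_isClosed_subset hU
  have hlower := hμ.expRateGE_measureReal_of_isOpen hrate hρ isOpen_interior
    (mem_interior_iff_mem_nhds.2 hV)
  have hupper := hκ.expRateLE_compProd_prod_of_isClosed hrate hρ hμ isClosed_univ hVc hc
    fun x _ z hz => hle x z (hVU hz)
  refine hcy.not_ge (hlower.le_of_expRateLE hrate hc hupper (.of_forall fun k => ?_))
  calc (μ k).real (interior V) ≤ (μ k).real V := measureReal_mono interior_subset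
    _ = (μ k ⊗ₘ κ (rate k)).real (univ ×ˢ V) :=
      (measureReal_compProd_univ_prod_of_invariant (hinv k) hVc.measurableSet).symm

theorem exists_lt_mul_closure_of_invariant {G : Set E} (hκ : IsLDLimitKernel κ q)
    (hrate : Tendsto rate atTop atTop) (hρ : IsDeviabilityDensity ρ) (hμ : LDConv μ rate ρ)
    (hinv : ∀ k, (κ (rate k)).Invariant (μ k)) (hx : x ∈ interior Gᶜ) (hy : y ∈ interior G)
    (hc : 0 ≤ c) (hlt : c < ρ x * q x y) :
    ∃ x' ∈ closure G, ∃ y' ∈ closure Gᶜ, c < ρ x' * q x' y' := by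
  by_contra! hle
  have hlower := hκ.expRateGE_compProd_prod_of_isOpen hrate hρ hμ isOpen_interior
    isOpen_interior hx hy
  have hupper := hκ.expRateLE_compProd_prod_of_isClosed hrate hρ hμ isClosed_closure
    isClosed_closure hc hle
  refine hlt.not_ge (hlower.le_of_expRateLE hrate hc hupper (.of_forall fun k => ?_))
  calc (μ k ⊗ₘ κ (rate k)).real (interior Gᶜ ×ˢ interior G)
      ≤ (μ k ⊗ₘ κ (rate k)).real ((interior G)ᶜ ×ˢ interior G) :=
        measureReal_mono (prod_mono (interior_subset.trans
          (compl_subset_compl.2 interior_subset)) subset_rfl)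
    _ = (μ k ⊗ₘ κ (rate k)).real (interior G ×ˢ (interior G)ᶜ) :=
        measureReal_compProd_compl_prod_of_invariant (hinv k) measurableSet_interior
    _ ≤ (μ k ⊗ₘ κ (rate k)).real (closure G ×ˢ closure Gᶜ) :=
        measureReal_mono (prod_mono (interior_subset.trans subset_closure)
          closure_compl.ge)

end IsLDLimitKernel

/-- The properties of an invariant density `ρ` of a transition density `q` on which the analysis of
LD limit points of invariant measures rests: superinvariance, the recovery of `ρ` from its
transitions, and the balance of the fluxes through the boundary of a set. -/
structure IsInvariantDensity (q : E → E → ℝ) (ρ : E → ℝ) : Prop where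
  mul_le : ∀ x y, ρ x * q x y ≤ ρ y
  exists_lt : ∀ {y U c}, U ∈ 𝓝 y → 0 ≤ c → c < ρ y → ∃ x, ∃ y' ∈ U, c < ρ x * q x y'
  balance : ∀ {G : Set E} {x y c}, x ∈ interior Gᶜ → y ∈ interior G → 0 ≤ c → c < ρ x * q x y →
    ∃ x' ∈ closure G, ∃ y' ∈ closure Gᶜ, c < ρ x' * q x' y'

theorem IsLDLimitKernel.isInvariantDensity (hκ : IsLDLimitKernel κ q)
    (hrate : Tendsto rate atTop atTop) (hρ : IsDeviabilityDensity ρ) (hμ : LDConv μ rate ρ)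
    (hinv : ∀ k, (κ (rate k)).Invariant (μ k)) : IsInvariantDensity q ρ where
  mul_le := hκ.mul_le_of_invariant hrate hρ hμ hinv
  exists_lt := hκ.exists_lt_mul_of_invariant hrate hρ hμ hinv
  balance := hκ.exists_lt_mul_closure_of_invariant hrate hρ hμ hinv

end JointLaw

section Markov

variable {E : Type*} [MetricSpace E]

/-- The path which follows `X` up to time `s` and `Y` afterwards. -/
def pathConcat (s : ℝ≥0) (X Y : C(ℝ≥0, E)) (h : X s = Y 0) : C(ℝ≥0, E) where
  toFun t := if t ≤ s then X t else Y (t - s)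
  continuous_toFun := by
    refine Continuous.if_le X.continuous (Y.continuous.comp (by fun_prop)) continuous_id
      continuous_const fun t ht => ?_
    rw [show t = s from ht, tsub_self, h]

theorem pathConcat_apply_of_le {s t : ℝ≥0} {X Y : C(ℝ≥0, E)} (h : X s = Y 0) (hts : t ≤ s) :
    pathConcat s X Y h t = X t :=
  if_pos hts

theorem pshift_pathConcat {s : ℝ≥0} {X Y : C(ℝ≥0, E)} (h : X s = Y 0) :
    pshift s (pathConcat s X Y h) = Y := by
  ext t
  rcases eq_or_ne t 0 with rfl | ht
  · exact (pathConcat_apply_of_le h (add_zero s).le).trans ((congrArg X (add_zero s)).trans h)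
  · have hlt : ¬s + t ≤ s := by simpa only [add_le_iff_nonpos_right, nonpos_iff_eq_zero] using ht
    exact (if_neg hlt).trans (congrArg Y (add_tsub_cancel_left s t))

theorem exists_mem_frontier_of_mem_closure (X : C(ℝ≥0, E)) {G : Set E} {t : ℝ≥0}
    (h0 : X 0 ∈ closure G) (ht : X t ∈ closure Gᶜ) : ∃ s ≤ t, X s ∈ frontier G := by
  obtain ⟨s, hs, hsG⟩ := isPreconnected_closed_iff.1 isPreconnected_Icc (X ⁻¹' closure G)
    (X ⁻¹' closure Gᶜ) (isClosed_closure.preimage X.continuous)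
    (isClosed_closure.preimage X.continuous)
    (fun s _ => (em (X s ∈ G)).imp (fun h => subset_closure h) fun h => subset_closure h)
    ⟨0, left_mem_Icc.2 t.2, h0⟩ ⟨t, right_mem_Icc.2 t.2, ht⟩
  exact ⟨s, hs.2, (frontier_eq_closure_inter_closure (s := G)).ge hsG⟩

/-- Path densities started at each point and satisfying the maxitive Markov property (2.3). -/
structure IsMarkovFamily (Px : E → C(ℝ≥0, E) → ℝ) : Prop where
  dev : ∀ x, IsDeviabilityDensity (Px x)
  start : ∀ x (X : C(ℝ≥0, E)), X 0 ≠ x → Px x X = 0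
  markov : ∀ x (X : C(ℝ≥0, E)) (s : ℝ≥0),
    Px x X = (⨆ X' ∈ {X' : C(ℝ≥0, E) | ∀ u ≤ s, X' u = X u}, Px x X') * Px (X s) (pshift s X)

namespace IsMarkovFamily

variable {Px : E → C(ℝ≥0, E) → ℝ} {x y z : E} {s t : ℝ≥0}

theorem isDeviabilityDensity_transDen (h : IsMarkovFamily Px) (x : E) (t : ℝ≥0) :
    IsDeviabilityDensity fun y => transDen Px x t y :=
  (h.dev x).map (continuous_eval_const t)

theorem transDen_nonneg (h : IsMarkovFamily Px) (x : E) (t : ℝ≥0) (y : E) :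
    0 ≤ transDen Px x t y :=
  (h.isDeviabilityDensity_transDen x t).nonneg y

theorem transDen_le_one (h : IsMarkovFamily Px) (x : E) (t : ℝ≥0) (y : E) :
    transDen Px x t y ≤ 1 :=
  (h.isDeviabilityDensity_transDen x t).le_one y

theorem le_transDen (h : IsMarkovFamily Px) (x : E) (X : C(ℝ≥0, E)) (t : ℝ≥0) :
    Px x X ≤ transDen Px x t (X t) :=
  (h.dev x).le_biSup_fiber (fun X => X t) X

theorem exists_path_eq_transDen (h : IsMarkovFamily Px) (hpos : 0 < transDen Px x t y) :
    ∃ X : C(ℝ≥0, E), X 0 = x ∧ X t = y ∧ Px x X = transDen Px x t y := by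
  obtain ⟨X, hXt, hX⟩ :=
    (h.dev x).exists_eq_biSup_fiber (continuous_eval_const t) hpos
  refine ⟨X, ?_, hXt, hX⟩
  by_contra hX0
  exact hpos.ne' (hX.symm.trans (h.start x X hX0))

theorem le_transDen_mul_transDen (h : IsMarkovFamily Px) (x : E) (X : C(ℝ≥0, E)) (s t : ℝ≥0) :
    Px x X ≤ transDen Px x s (X s) * transDen Px (X s) t (X (s + t)) := by
  rw [h.markov x X s]
  refine mul_le_mul (biSup_le_of_forall_le (h.transDen_nonneg x s _) fun X' hX' => ?_)
    (h.le_transDen (X s) (pshift s X) t) ((h.dev _).nonneg _) (h.transDen_nonneg x s _)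
  exact hX' s le_rfl ▸ h.le_transDen x X' s

theorem mul_le_of_pathConcat (h : IsMarkovFamily Px) {X Y : C(ℝ≥0, E)} (hXY : X s = Y 0) :
    Px x X * Px (Y 0) Y ≤ Px x (pathConcat s X Y hXY) := by
  rw [h.markov x (pathConcat s X Y hXY) s, pshift_pathConcat, pathConcat_apply_of_le hXY le_rfl,
    hXY]
  refine mul_le_mul_of_nonneg_right ?_ ((h.dev _).nonneg _)
  exact le_biSup_of_forall_le (fun X' _ => (h.dev x).le_one X')
    fun u hu => (pathConcat_apply_of_le hXY hu).symm

theorem transDen_mul_transDen_le (h : IsMarkovFamily Px) (x y z : E) (s t : ℝ≥0) :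
    transDen Px x s y * transDen Px y t z ≤ transDen Px x (s + t) z := by
  rcases (h.transDen_nonneg x s y).eq_or_lt' with hxy | hxy
  · rw [hxy, zero_mul]
    exact h.transDen_nonneg x (s + t) z
  rcases (h.transDen_nonneg y t z).eq_or_lt' with hyz | hyz
  · rw [hyz, mul_zero]
    exact h.transDen_nonneg x (s + t) z
  obtain ⟨X, -, hXs, hX⟩ := h.exists_path_eq_transDen hxy
  obtain ⟨Y, rfl, rfl, hY⟩ := h.exists_path_eq_transDen hyz
  have hend : pathConcat s X Y hXs (s + t) = Y t :=
    DFunLike.congr_fun (pshift_pathConcat hXs) t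
  calc transDen Px x s (Y 0) * transDen Px (Y 0) t (Y t) = Px x X * Px (Y 0) Y := by rw [hX, hY]
    _ ≤ Px x (pathConcat s X Y hXs) := h.mul_le_of_pathConcat hXs
    _ ≤ transDen Px x (s + t) (Y t) := hend ▸ h.le_transDen x _ (s + t)

theorem exists_mem_frontier_transDen_le (h : IsMarkovFamily Px) {G : Set E} (hx : x ∈ closure G)
    (hy : y ∈ closure Gᶜ) (hpos : 0 < transDen Px x t y) :
    ∃ z ∈ frontier G, ∃ s u, transDen Px x t y ≤ transDen Px x s z * transDen Px z u y := by
  obtain ⟨X, rfl, rfl, hX⟩ := h.exists_path_eq_transDen hpos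
  obtain ⟨s, hst, hs⟩ := exists_mem_frontier_of_mem_closure X hx hy
  refine ⟨X s, hs, s, t - s, ?_⟩
  rw [← hX]
  simpa only [add_tsub_cancel_of_le hst] using h.le_transDen_mul_transDen (X 0) X s (t - s)

end IsMarkovFamily

/-- A Markov family of path densities which satisfies (2.2) and (2.4), apart from (iii), with
equilibrium set `A`. -/
structure IsAttractingSystem (Px : E → C(ℝ≥0, E) → ℝ) (A : Set E) : Prop
    extends IsMarkovFamily Px where
  usc : UpperSemicontinuous fun q : E × C(ℝ≥0, E) => Px q.1 q.2
  cpt : ∀ K : Set E, IsCompact K → ∀ γ ∈ Ioc (0 : ℝ) 1,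
    IsCompact (⋃ x ∈ K, {X : C(ℝ≥0, E) | γ ≤ Px x X})
  locFin : ∀ K : Set E, IsCompact K → (K ∩ A).Finite
  attract : ∀ x (X : C(ℝ≥0, E)), Px x X = 1 → (⨅ t : ℝ≥0, infDist (X t) A) = 0
  equil : ∀ a ∈ A, Px a (ContinuousMap.const ℝ≥0 a) = 1
  nearA : ∀ ε : ℝ, 0 < ε → ∃ δ : ℝ, 0 < δ ∧ ∀ x : E, infDist x A < δ →
    ∃ s₀ s₁ : ℝ≥0, 0 < s₀ ∧ 0 < s₁ ∧ ∃ a ∈ A,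
      1 - ε < transDen Px x s₀ a ∧ 1 - ε < transDen Px a s₁ x
  localMove : ∀ x : E, ∀ ε : ℝ, 0 < ε → ∃ δ : ℝ, 0 < δ ∧ ∃ t₀ t₁ : ℝ≥0,
    ∀ x' : E, dist x x' < δ → 1 - ε < transDen Px x t₀ x' ∧ 1 - ε < transDen Px x' t₁ x

theorem DevSetup.isAttractingSystem {Px : E → C(ℝ≥0, E) → ℝ} {A : Set E} (h : DevSetup E Px A) :
    IsAttractingSystem Px A :=
  { h with }

namespace IsAttractingSystem

variable {Px : E → C(ℝ≥0, E) → ℝ} {A K : Set E} {a : E} {δ η c r : ℝ} {T : ℝ≥0}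

theorem transDen_self (h : IsAttractingSystem Px A) (ha : a ∈ A) (t : ℝ≥0) :
    transDen Px a t a = 1 :=
  (h.transDen_le_one a t a).antisymm
    ((h.equil a ha).ge.trans (h.le_transDen a (ContinuousMap.const ℝ≥0 a) t))

theorem exists_eventually_lt_transDen (h : IsAttractingSystem Px A) (x : E) (hr : r < 1) :
    ∃ t₀ t₁, ∀ᶠ x' in 𝓝 x, r < transDen Px x t₀ x' ∧ r < transDen Px x' t₁ x := by
  obtain ⟨δ, hδ, t₀, t₁, hmove⟩ := h.localMove x (1 - r) (sub_pos.2 hr)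
  rw [sub_sub_cancel] at hmove
  exact ⟨t₀, t₁, eventually_of_mem (ball_mem_nhds x hδ) fun x' hx' => hmove x' (mem_ball'.1 hx')⟩

theorem exists_detour (h : IsAttractingSystem Px A) (hr : r < 1) :
    ∃ δ > 0, ∀ z, infDist z A < δ → ∃ a ∈ A, ∃ s u, ∀ x y t t',
      r * (transDen Px x t z * transDen Px z t' y) ≤
        transDen Px x (t + s) a * transDen Px a (u + t') y := by
  obtain ⟨δ, hδ, hnear⟩ := h.nearA ((1 - r) / 2) (by linarith)
  refine ⟨δ, hδ, fun z hz => ?_⟩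
  obtain ⟨s, u, -, -, a, ha, hza, haz⟩ := hnear z hz
  have hloop : r ≤ transDen Px z s a * transDen Px a u z := by
    nlinarith [h.transDen_le_one z s a, h.transDen_le_one a u z]
  refine ⟨a, ha, s, u, fun x y t t' => ?_⟩
  calc r * (transDen Px x t z * transDen Px z t' y)
      ≤ (transDen Px z s a * transDen Px a u z) * (transDen Px x t z * transDen Px z t' y) :=
        mul_le_mul_of_nonneg_right hloop
          (mul_nonneg (h.transDen_nonneg x t z) (h.transDen_nonneg z t' y))
    _ = (transDen Px x t z * transDen Px z s a) * (transDen Px a u z * transDen Px z t' y) := by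
        ring
    _ ≤ transDen Px x (t + s) a * transDen Px a (u + t') y :=
        mul_le_mul (h.transDen_mul_transDen_le x z a t s) (h.transDen_mul_transDen_le a z y u t')
          (mul_nonneg (h.transDen_nonneg a u z) (h.transDen_nonneg z t' y))
          (h.transDen_nonneg x (t + s) a)

theorem isCompact_setOf_away (h : IsAttractingSystem Px A) (hK : IsCompact K) (hc : c ∈ Ioc 0 1)
    (δ : ℝ) (T : ℝ≥0) : IsCompact {X : C(ℝ≥0, E) |
      c ≤ Px (X 0) X ∧ X 0 ∈ K ∧ ∀ s ≤ T, δ ≤ infDist (X s) A} := by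
  refine (h.cpt K hK c hc).of_isClosed_subset ?_ fun X hX => mem_biUnion hX.2.1 hX.1
  have husc : UpperSemicontinuous fun X : C(ℝ≥0, E) => Px (X 0) X :=
    h.usc.comp ((continuous_eval_const 0).prodMk continuous_id)
  have haway : IsClosed {X : C(ℝ≥0, E) | ∀ s ≤ T, δ ≤ infDist (X s) A} := by
    simp only [ofPred_forall]
    exact isClosed_biInter fun s _ => isClosed_le continuous_const
      ((continuous_infDist_pt A).comp (continuous_eval_const s))
  exact (husc.isClosed_preimage c).inter
    ((hK.isClosed.preimage (continuous_eval_const 0)).inter haway)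

theorem exists_away_lt_one (h : IsAttractingSystem Px A) (hK : IsCompact K) (hδ : 0 < δ) :
    ∃ T : ℝ≥0, ∃ η ∈ Ico (0 : ℝ) 1, ∀ X : C(ℝ≥0, E), X 0 ∈ K →
      (∀ s ≤ T, δ ≤ infDist (X s) A) → Px (X 0) X ≤ η := by
  by_contra! hcon
  have hη : ∀ k : ℕ, (k + 1 : ℝ) / (k + 2) ∈ Ioo (0 : ℝ) 1 := fun k =>
    ⟨by positivity, (div_lt_one (by positivity)).2 (by linarith)⟩
  obtain ⟨Y, hY⟩ := IsCompact.nonempty_iInter_of_sequence_nonempty_isCompact_isClosed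
    (fun k : ℕ => {X : C(ℝ≥0, E) | (k + 1 : ℝ) / (k + 2) ≤ Px (X 0) X ∧ X 0 ∈ K ∧
      ∀ s ≤ (k : ℝ≥0), δ ≤ infDist (X s) A})
    (fun k X hX => ⟨le_trans (by
        push_cast
        rw [div_le_div_iff₀ (by positivity) (by positivity)]
        linarith) hX.1, hX.2.1,
      fun s hs => hX.2.2 s (hs.trans (by push_cast; exact le_self_add))⟩)
    (fun k => by
      obtain ⟨X, hXK, hXA, hX⟩ := hcon k _ (Ioo_subset_Ico_self (hη k))
      exact ⟨X, hX.le, hXK, hXA⟩)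
    (h.isCompact_setOf_away hK (Ioo_subset_Ioc_self (hη 0)) δ _)
    fun k => (h.isCompact_setOf_away hK (Ioo_subset_Ioc_self (hη k)) δ _).isClosed
  rw [mem_iInter] at hY
  have hlim : Tendsto (fun k : ℕ => (k + 1 : ℝ) / (k + 2)) atTop (𝓝 1) := by
    convert! tendsto_add_mul_div_add_mul_atTop_nhds (1 : ℝ) 2 1 one_ne_zero using 2 <;> ring
  have hYone : Px (Y 0) Y = 1 :=
    ((h.dev _).le_one Y).antisymm (le_of_tendsto' hlim fun k => (hY k).1)
  have hYaway : δ ≤ ⨅ t : ℝ≥0, infDist (Y t) A := le_ciInf fun t =>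
    let ⟨k, hk⟩ := exists_nat_ge t
    (hY k).2.2 t hk
  exact (hδ.trans_le hYaway).ne' (h.attract _ Y hYone)

theorem away_le_pow (h : IsAttractingSystem Px A) (hη : 0 ≤ η)
    (haway : ∀ X : C(ℝ≥0, E), X 0 ∈ K → (∀ s ≤ T, δ ≤ infDist (X s) A) → Px (X 0) X ≤ η)
    (k : ℕ) (X : C(ℝ≥0, E)) (hXK : ∀ s, X s ∈ K) (hXA : ∀ s ≤ k * T, δ ≤ infDist (X s) A) :
    Px (X 0) X ≤ η ^ k := by
  induction k generalizing X with
  | zero => simpa only [pow_zero] using (h.dev _).le_one X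
  | succ k ih =>
    have hmul : ((k + 1 : ℕ) : ℝ≥0) * T = T + k * T := by push_cast; ring
    rw [h.markov (X 0) X T, pow_succ']
    refine mul_le_mul (biSup_le_of_forall_le hη fun X' hX' => ?_) ?_ ((h.dev _).nonneg _) hη
    · rw [← hX' 0 zero_le]
      refine haway X' (hX' 0 zero_le ▸ hXK 0) fun s hs => ?_
      rw [hX' s hs]
      exact hXA s (hs.trans (hmul ▸ le_self_add))
    · have hshift : pshift T X 0 = X T := congrArg X (add_zero T)
      rw [← hshift]
      exact ih (pshift T X) (fun s => hXK (T + s)) fun s hs =>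
        hXA (T + s) (hmul ▸ add_le_add_right hs T)

theorem exists_forall_path_near (h : IsAttractingSystem Px A) (hK : IsCompact K) (hc : 0 < c)
    (hδ : 0 < δ) : ∃ T : ℝ≥0, ∀ X : C(ℝ≥0, E), (∀ s, X s ∈ K) → c ≤ Px (X 0) X →
      ∃ s ≤ T, infDist (X s) A < δ := by
  obtain ⟨T, η, ⟨hη0, hη1⟩, haway⟩ := h.exists_away_lt_one hK hδ
  obtain ⟨k, hk⟩ := exists_pow_lt_of_lt_one hc hη1
  refine ⟨k * T, fun X hXK hcX => ?_⟩
  by_contra! hXA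
  exact (hk.trans_le hcX).not_ge (h.away_le_pow hη0 haway k X hXK hXA)

-- Superinvariance of `ρ` confines every path of large weight to a compact superlevel set of `ρ`.
theorem exists_forall_visit (h : IsAttractingSystem Px A) {ρ : E → ℝ}
    (hρ : IsDeviabilityDensity ρ) (hinv : ∀ t x y, ρ x * transDen Px x t y ≤ ρ y) (hc : 0 < c)
    (hr0 : 0 ≤ r) (hr1 : r < 1) : ∃ T, ∀ t ≥ T, ∀ x y, c ≤ ρ x * transDen Px x t y → ∃ a ∈ A, ∃ s u,
      r * (ρ x * transDen Px x t y) ≤ ρ x * (transDen Px x s a * transDen Px a u y) := by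
  obtain ⟨δ, hδ, hdetour⟩ := h.exists_detour hr1
  obtain ⟨T, hT⟩ := h.exists_forall_path_near (hρ.isCompact_superlevel hc) hc hδ
  refine ⟨T, fun t ht x y hxy => ?_⟩
  obtain ⟨X, rfl, rfl, hX⟩ :=
    h.exists_path_eq_transDen (pos_of_mul_pos_right (hc.trans_le hxy) (hρ.nonneg x))
  rw [← hX] at hxy
  have hXK : ∀ s, c ≤ ρ (X s) := fun s =>
    hxy.trans <| (mul_le_mul_of_nonneg_left (h.le_transDen _ X s) (hρ.nonneg _)).trans
      (hinv s _ _)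
  have hcX : c ≤ Px (X 0) X := hxy.trans
    (mul_le_of_le_one_left ((h.dev _).nonneg X) (hρ.le_one _))
  obtain ⟨s, hsT, hs⟩ := hT X hXK hcX
  obtain ⟨a, ha, s', u, hsu⟩ := hdetour (X s) hs
  refine ⟨a, ha, s + s', u + (t - s), ?_⟩
  have hsplit := h.le_transDen_mul_transDen (X 0) X s (t - s)
  rw [add_tsub_cancel_of_le (hsT.trans ht), hX] at hsplit
  calc r * (ρ (X 0) * transDen Px (X 0) t (X t))
      = ρ (X 0) * (r * transDen Px (X 0) t (X t)) := mul_left_comm _ _ _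
    _ ≤ ρ (X 0) * (transDen Px (X 0) (s + s') a * transDen Px a (u + (t - s)) (X t)) :=
        mul_le_mul_of_nonneg_left
          ((mul_le_mul_of_nonneg_left hsplit hr0).trans (hsu (X 0) (X t) s (t - s))) (hρ.nonneg _)

end IsAttractingSystem

/-- `PL x y` is the limit `Π(x, y)` of `Π_{x,t}(y)` as `t → ∞`. -/
def IsLimitTransDen (Px : E → C(ℝ≥0, E) → ℝ) (PL : E → E → ℝ) : Prop :=
  ∀ x y, Tendsto (fun t => transDen Px x t y) atTop (𝓝 (PL x y))

namespace IsLimitTransDen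

variable {Px : E → C(ℝ≥0, E) → ℝ} {PL : E → E → ℝ} {A : Set E} {a : E}

theorem nonneg (hPL : IsLimitTransDen Px PL) (h : IsMarkovFamily Px) (x y : E) : 0 ≤ PL x y :=
  ge_of_tendsto' (hPL x y) fun t => h.transDen_nonneg x t y

theorem le_one (hPL : IsLimitTransDen Px PL) (h : IsMarkovFamily Px) (x y : E) : PL x y ≤ 1 :=
  le_of_tendsto' (hPL x y) fun t => h.transDen_le_one x t y

theorem transDen_mul_le (hPL : IsLimitTransDen Px PL) (h : IsMarkovFamily Px) (x y z : E)
    (s : ℝ≥0) : transDen Px x s y * PL y z ≤ PL x z :=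
  le_of_tendsto_of_tendsto' ((hPL y z).const_mul _)
    ((hPL x z).comp (tendsto_atTop_mono (fun _ => le_add_self) tendsto_id))
    (h.transDen_mul_transDen_le x y z s)

theorem mul_transDen_le (hPL : IsLimitTransDen Px PL) (h : IsMarkovFamily Px) (x y z : E)
    (s : ℝ≥0) : PL x y * transDen Px y s z ≤ PL x z :=
  le_of_tendsto_of_tendsto' ((hPL x y).mul_const _)
    ((hPL x z).comp (tendsto_atTop_mono (fun _ => le_self_add) tendsto_id))
    fun t => h.transDen_mul_transDen_le x y z t s

theorem eq_one_of_mem (hPL : IsLimitTransDen Px PL) (h : IsAttractingSystem Px A) (ha : a ∈ A) :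
    PL a a = 1 :=
  tendsto_nhds_unique (hPL a a) (tendsto_const_nhds.congr fun t => (h.transDen_self ha t).symm)

theorem transDen_le_of_mem_left (hPL : IsLimitTransDen Px PL) (h : IsAttractingSystem Px A)
    (ha : a ∈ A) (t : ℝ≥0) (y : E) : transDen Px a t y ≤ PL a y := by
  simpa only [hPL.eq_one_of_mem h ha, one_mul] using hPL.mul_transDen_le h.toIsMarkovFamily a a y t

theorem transDen_le_of_mem_right (hPL : IsLimitTransDen Px PL) (h : IsAttractingSystem Px A)
    (ha : a ∈ A) (x : E) (t : ℝ≥0) : transDen Px x t a ≤ PL x a := by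
  simpa only [hPL.eq_one_of_mem h ha, mul_one] using hPL.transDen_mul_le h.toIsMarkovFamily x a a t

theorem upperSemicontinuous_left (hPL : IsLimitTransDen Px PL) (h : IsAttractingSystem Px A)
    (y : E) : UpperSemicontinuous fun x => PL x y := by
  refine upperSemicontinuous_of_forall_eventually_mul_le
    (fun x => hPL.nonneg h.toIsMarkovFamily x y) fun x r hr => ?_
  obtain ⟨t₀, t₁, hmove⟩ := h.exists_eventually_lt_transDen x hr.2
  filter_upwards [hmove] with x' hx'
  exact (mul_le_mul_of_nonneg_right hx'.1.le (hPL.nonneg h.toIsMarkovFamily x' y)).trans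
    (hPL.transDen_mul_le h.toIsMarkovFamily x x' y t₀)

end IsLimitTransDen

/-- An attracting system with limiting transition density `PL`, together with a deviability density
`ρ` which is invariant at all times. -/
structure IsInvariantSystem (Px : E → C(ℝ≥0, E) → ℝ) (A : Set E) (PL : E → E → ℝ) (ρ : E → ℝ) :
    Prop extends IsAttractingSystem Px A where
  lim : IsLimitTransDen Px PL
  devρ : IsDeviabilityDensity ρ
  inv : ∀ t, IsInvariantDensity (fun x y => transDen Px x t y) ρ

namespace IsInvariantSystem

variable {Px : E → C(ℝ≥0, E) → ℝ} {A A' A'' G Γ C B : Set E} {PL : E → E → ℝ} {ρ : E → ℝ}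
  {a x y : E} {b c : ℝ} {s u : ℝ≥0}

theorem lim_nonneg (h : IsInvariantSystem Px A PL ρ) (x y : E) : 0 ≤ PL x y :=
  h.lim.nonneg h.toIsMarkovFamily x y

theorem lim_le_one (h : IsInvariantSystem Px A PL ρ) (x y : E) : PL x y ≤ 1 :=
  h.lim.le_one h.toIsMarkovFamily x y

theorem mul_lim_le (h : IsInvariantSystem Px A PL ρ) (x y : E) : ρ x * PL x y ≤ ρ y :=
  le_of_tendsto' ((h.lim x y).const_mul _) fun t => (h.inv t).mul_le x y

theorem mul_lim_nonneg (h : IsInvariantSystem Px A PL ρ) (x y : E) : 0 ≤ ρ x * PL x y :=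
  mul_nonneg (h.devρ.nonneg x) (h.lim_nonneg x y)

theorem mul_lim_le_left (h : IsInvariantSystem Px A PL ρ) (x y : E) : ρ x * PL x y ≤ ρ x :=
  mul_le_of_le_one_right (h.devρ.nonneg x) (h.lim_le_one x y)

theorem mul_lim_le_maxFlux (h : IsInvariantSystem Px A PL ρ) (hx : x ∈ G) (hy : y ∈ Γ) :
    ρ x * PL x y ≤ maxFlux PL ρ G Γ :=
  mul_le_maxFlux h.devρ.1 h.lim_le_one hx hy

theorem maxFlux_nonneg (h : IsInvariantSystem Px A PL ρ) : 0 ≤ maxFlux PL ρ G Γ :=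
  Real.iSup_nonneg fun x => Real.iSup_nonneg fun _ => mul_nonneg (h.devρ.nonneg x) <|
    Real.iSup_nonneg fun y => Real.iSup_nonneg fun _ => h.lim_nonneg x y

theorem mul_transDen_mul_transDen_le_right (h : IsInvariantSystem Px A PL ρ) (ha : a ∈ A)
    (x y : E) (s u : ℝ≥0) : ρ x * (transDen Px x s a * transDen Px a u y) ≤ ρ a * PL a y := by
  rw [← mul_assoc]
  exact mul_le_mul ((h.inv s).mul_le x a)
    (h.lim.transDen_le_of_mem_left h.toIsAttractingSystem ha u y) (h.transDen_nonneg a u y)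
    (h.devρ.nonneg a)

theorem exists_mem_lt_mul_lim (h : IsInvariantSystem Px A PL ρ) (hc : 0 ≤ c) (hy : c < ρ y) :
    ∃ a ∈ A, c < ρ a * PL a y := by
  obtain ⟨b, hcb, hby⟩ := exists_between hy
  have hb : 0 < b := hc.trans_lt hcb
  obtain ⟨r, hr, hcr⟩ := exists_mem_Ioo_lt_mul hc hcb
  obtain ⟨q, hq, hcq⟩ := exists_mem_Ioo_lt_mul hc hcr
  obtain ⟨_, t₁, hmove⟩ := h.exists_eventually_lt_transDen y hq.2
  obtain ⟨T, hT⟩ := h.exists_forall_visit h.devρ (fun t => (h.inv t).mul_le) (mul_pos hb hq.1)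
    hr.1.le hr.2
  obtain ⟨x, y', hy', hx⟩ := (h.inv T).exists_lt hmove hb.le hby
  have hxy : b * q ≤ ρ x * transDen Px x (T + t₁) y :=
    calc b * q ≤ ρ x * transDen Px x T y' * transDen Px y' t₁ y :=
          mul_le_mul hx.le hy'.2.le hq.1.le (hb.le.trans hx.le)
      _ ≤ ρ x * transDen Px x (T + t₁) y := by
          rw [mul_assoc]
          exact mul_le_mul_of_nonneg_left (h.transDen_mul_transDen_le x y' y T t₁) (h.devρ.nonneg x)
  obtain ⟨a, ha, s, u, hsu⟩ := hT (T + t₁) le_self_add x y hxy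
  refine ⟨a, ha, ?_⟩
  calc c < r * (b * q) := by linarith
    _ ≤ r * (ρ x * transDen Px x (T + t₁) y) := mul_le_mul_of_nonneg_left hxy hr.1.le
    _ ≤ ρ a * PL a y := hsu.trans (h.mul_transDen_mul_transDen_le_right ha x y s u)

theorem exists_mem_le_mul_lim (h : IsInvariantSystem Px A PL ρ) (hy : 0 < ρ y) :
    ∃ a ∈ A, ρ y ≤ ρ a * PL a y := by
  obtain ⟨a₀, ha₀, -⟩ := h.exists_mem_lt_mul_lim le_rfl hy
  obtain ⟨a, ha, hmax⟩ := h.devρ.exists_isMaxOn_of_forall_finite h.locFin ⟨a₀, ha₀⟩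
    fun a _ => ⟨h.mul_lim_nonneg a y, h.mul_lim_le_left a y⟩
  refine ⟨a, ha, le_of_not_gt fun hlt => ?_⟩
  obtain ⟨a', ha', hlt'⟩ := h.exists_mem_lt_mul_lim (h.mul_lim_nonneg a y) hlt
  exact (hmax ha').not_gt hlt'

theorem mul_lim_le_of_forall_frontier_le (h : IsInvariantSystem Px A PL ρ) (hb : 0 ≤ b)
    (hG : ∀ z ∈ frontier G, ρ z ≤ b) (hx : x ∈ closure G) (hy : y ∈ closure Gᶜ) :
    ρ x * PL x y ≤ b := by
  refine le_of_tendsto' ((h.lim x y).const_mul _) fun t => ?_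
  rcases (h.transDen_nonneg x t y).eq_or_lt' with hxy | hxy
  · rwa [hxy, mul_zero]
  obtain ⟨z, hz, s, u, hsu⟩ := h.exists_mem_frontier_transDen_le hx hy hxy
  calc ρ x * transDen Px x t y ≤ ρ x * transDen Px x s z :=
        mul_le_mul_of_nonneg_left (hsu.trans <| mul_le_of_le_one_right (h.transDen_nonneg x s z)
          (h.transDen_le_one z u y)) (h.devρ.nonneg x)
    _ ≤ b := ((h.inv s).mul_le x z).trans (hG z hz)

-- Invariance turns flux from the complement of `G` into flux out of `G` over a long time, and such
-- a path has to pass close to `A`.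
theorem exists_mem_lt_mul_transDen (h : IsInvariantSystem Px A PL ρ) (hx : x ∈ interior Gᶜ)
    (hy : y ∈ interior G) (hc : 0 ≤ c) (hlt : c < ρ x * PL x y) :
    ∃ x' ∈ closure G, ∃ y' ∈ closure Gᶜ, ∃ a ∈ A, ∃ s u,
      c < ρ x' * (transDen Px x' s a * transDen Px a u y') := by
  obtain ⟨b, hcb, hbx⟩ := exists_between hlt
  obtain ⟨r, hr, hcr⟩ := exists_mem_Ioo_lt_mul hc hcb
  obtain ⟨T, hT⟩ := h.exists_forall_visit h.devρ (fun t => (h.inv t).mul_le) (hc.trans_lt hcb)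
    hr.1.le hr.2
  obtain ⟨t, htT, hbt⟩ := ((eventually_ge_atTop T).and
    (((h.lim x y).const_mul _).eventually_const_lt hbx)).exists
  obtain ⟨x', hx', y', hy', hb⟩ := (h.inv t).balance hx hy (hc.trans hcb.le) hbt
  obtain ⟨a, ha, s, u, hsu⟩ := hT t htT x' y' hb.le
  exact ⟨x', hx', y', hy', a, ha, s, u,
    (hcr.trans (mul_lt_mul_of_pos_left hb hr.1)).trans_le hsu⟩

theorem exists_mem_frontier_mul_transDen_le (h : IsInvariantSystem Px A PL ρ) (ha : a ∈ A)
    (hx : x ∈ closure G) (haG : a ∈ closure Gᶜ) (hpos : 0 < transDen Px x s a) :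
    ∃ z ∈ frontier G, ρ x * transDen Px x s a ≤ ρ z * PL z a := by
  obtain ⟨z, hz, s₁, s₂, hs⟩ := h.exists_mem_frontier_transDen_le hx haG hpos
  refine ⟨z, hz, (mul_le_mul_of_nonneg_left hs (h.devρ.nonneg x)).trans ?_⟩
  rw [← mul_assoc]
  exact mul_le_mul ((h.inv s₁).mul_le x z)
    (h.lim.transDen_le_of_mem_right h.toIsAttractingSystem ha z s₂) (h.transDen_nonneg z s₂ a)
    (h.devρ.nonneg z)

theorem exists_forall_mul_lim_le (h : IsInvariantSystem Px A PL ρ) (hCc : IsClosed C)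
    (hC : C.Nonempty) (hBA : B ⊆ A) (hB : B.Nonempty) :
    ∃ z ∈ C, ∃ a ∈ B, ∀ z' ∈ C, ∀ a' ∈ B, ρ z' * PL z' a' ≤ ρ z * PL z a := by
  have hmaxC : ∀ a, ∃ z ∈ C, IsMaxOn (fun z => ρ z * PL z a) C z := fun a =>
    h.devρ.exists_isMaxOn_of_isClosed hCc hC
      (fun z _ => ⟨h.mul_lim_nonneg z a, h.mul_lim_le_left z a⟩) <|
      (upperSemicontinuous_mul h.devρ.upperSemicontinuous
        (h.lim.upperSemicontinuous_left h.toIsAttractingSystem a) h.devρ.nonneg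
        fun z => h.lim_nonneg z a).upperSemicontinuousOn C
  choose ζ hζC hζ using hmaxC
  obtain ⟨a, ha, hmax⟩ := h.devρ.exists_isMaxOn_of_forall_finite
    (f := fun a => ρ (ζ a) * PL (ζ a) a)
    (fun K hK => (h.locFin K hK).subset (inter_subset_inter_right K hBA)) hB
    fun a _ => ⟨h.mul_lim_nonneg (ζ a) a, h.mul_lim_le (ζ a) a⟩
  exact ⟨ζ a, hζC a, a, ha, fun z' hz' a' ha' => (hζ a' hz').trans (hmax ha')⟩

theorem mul_lim_le_maxFlux_interior (h : IsInvariantSystem Px A PL ρ) (ha : a ∈ A'')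
    (hbdry : maxFlux PL ρ A'' (interior Γ) ≤ ρ a →
      ⨆ y ∈ interior Γ, PL a y = ⨆ y ∈ closure Γ, PL a y) (hy : y ∈ closure Γ) :
    ρ a * PL a y ≤ maxFlux PL ρ A'' (interior Γ) := by
  rcases le_or_gt (maxFlux PL ρ A'' (interior Γ)) (ρ a) with hle | hlt
  · calc ρ a * PL a y ≤ ρ a * ⨆ y ∈ closure Γ, PL a y :=
          mul_le_mul_of_nonneg_left (le_biSup_of_forall_le (fun z _ => h.lim_le_one a z) hy)
            (h.devρ.nonneg a)
      _ = ρ a * ⨆ y ∈ interior Γ, PL a y := by rw [hbdry hle]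
      _ ≤ maxFlux PL ρ A'' (interior Γ) := mul_biSup_le_maxFlux h.devρ.1 h.lim_le_one ha
  · exact (h.mul_lim_le_left a y).trans hlt.le

theorem exists_mem_le_mul_lim_of_maxFlux_lt (h : IsInvariantSystem Px A PL ρ) (hA : A' ∪ A'' = A)
    (hy : y ∈ G) (hlt : maxFlux PL ρ A' G < ρ y) : ∃ a ∈ A'', ρ y ≤ ρ a * PL a y := by
  have hpos : 0 < ρ y :=
    h.maxFlux_nonneg.trans_lt hlt
  obtain ⟨a, ha, hay⟩ := h.exists_mem_le_mul_lim hpos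
  refine ⟨a, (hA.ge ha).resolve_left fun ha' => ?_, hay⟩
  exact (hay.trans (h.mul_lim_le_maxFlux ha' hy)).not_gt hlt

theorem le_maxFlux_of_mem_frontier (h : IsInvariantSystem Px A PL ρ) (hA : A' ∪ A'' = A)
    (hbdry : ∀ a ∈ A'', maxFlux PL ρ A'' (interior Γ) ≤ ρ a →
      ⨆ y ∈ interior Γ, PL a y = ⨆ y ∈ closure Γ, PL a y)
    (hgt : maxFlux PL ρ A' (closure Γᶜ) < maxFlux PL ρ A'' (interior Γ)) (hx : x ∈ frontier Γ) :
    ρ x ≤ maxFlux PL ρ A'' (interior Γ) := by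
  by_contra! hlt
  rw [frontier_eq_closure_inter_closure] at hx
  obtain ⟨a, ha, hax⟩ := h.exists_mem_le_mul_lim_of_maxFlux_lt hA hx.2 (hgt.trans hlt)
  exact (hax.trans (h.mul_lim_le_maxFlux_interior ha (hbdry a ha) hx.1)).not_gt hlt

theorem exists_mem_frontier_lt_mul_lim (h : IsInvariantSystem Px A PL ρ) (hA : A' ∪ A'' = A)
    (hΓ'' : A'' ⊆ interior Γᶜ) (hc : maxFlux PL ρ A' (closure Γᶜ) ≤ c)
    (hlt : c < maxFlux PL ρ A'' (interior Γ)) :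
    ∃ z ∈ frontier Γ, ∃ a ∈ A'', c < ρ z * PL z a := by
  have hc0 : 0 ≤ c := h.maxFlux_nonneg.trans hc
  obtain ⟨a₀, ha₀, y₀, hy₀, hlt₀⟩ := exists_lt_of_lt_maxFlux h.devρ.nonneg hc0 hlt
  obtain ⟨x, hx, y, hy, a, ha, s, u, hxy⟩ :=
    h.exists_mem_lt_mul_transDen (hΓ'' ha₀) hy₀ hc0 hlt₀
  have ha'' : a ∈ A'' := (hA.ge ha).resolve_left fun ha' =>
    ((h.mul_transDen_mul_transDen_le_right ha x y s u).trans
      ((h.mul_lim_le_maxFlux ha' hy).trans hc)).not_gt hxy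
  have hxa : c < ρ x * transDen Px x s a := hxy.trans_le <|
    mul_le_mul_of_nonneg_left (mul_le_of_le_one_right (h.transDen_nonneg x s a)
      (h.transDen_le_one a u y)) (h.devρ.nonneg x)
  obtain ⟨z, hz, hxz⟩ := h.exists_mem_frontier_mul_transDen_le ha hx
    (interior_subset_closure (hΓ'' ha''))
    (pos_of_mul_pos_right (hc0.trans_lt hxa) (h.devρ.nonneg x))
  exact ⟨z, hz, a, ha'', hxa.trans_le hxz⟩

theorem exists_mem_frontier_eq_maxFlux (h : IsInvariantSystem Px A PL ρ) (hA : A' ∪ A'' = A)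
    (hΓ'' : A'' ⊆ interior Γᶜ)
    (hgt : maxFlux PL ρ A' (closure Γᶜ) < maxFlux PL ρ A'' (interior Γ))
    (hfr : ∀ z ∈ frontier Γ, ρ z ≤ maxFlux PL ρ A'' (interior Γ)) :
    ∃ x ∈ frontier Γ, ρ x = maxFlux PL ρ A'' (interior Γ) ∧ ∃ a ∈ A'', PL x a = 1 := by
  obtain ⟨z₀, hz₀, a₀, ha₀, -⟩ := h.exists_mem_frontier_lt_mul_lim hA hΓ'' le_rfl hgt
  obtain ⟨x, hx, a, ha, hmax⟩ := h.exists_forall_mul_lim_le isClosed_frontier ⟨z₀, hz₀⟩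
    (subset_union_right.trans hA.le) ⟨a₀, ha₀⟩
  have hle : maxFlux PL ρ A'' (interior Γ) ≤ ρ x * PL x a := by
    by_contra! hlt
    obtain ⟨z, hz, a', ha', hza⟩ :=
      h.exists_mem_frontier_lt_mul_lim hA hΓ'' (le_max_left _ _) (max_lt hgt hlt)
    exact ((le_max_right _ _).trans_lt hza).not_ge (hmax z hz a' ha')
  have hρx : ρ x = maxFlux PL ρ A'' (interior Γ) :=
    (hfr x hx).antisymm (hle.trans (h.mul_lim_le_left x a))
  have hpos : 0 < ρ x := hρx ▸
    h.maxFlux_nonneg.trans_lt hgt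
  exact ⟨x, hx, hρx, a, ha, mul_left_cancel₀ hpos.ne' <|
    ((h.mul_lim_le_left x a).antisymm (hρx.le.trans hle)).trans (mul_one _).symm⟩

theorem exists_mem_eq_mul_lim (h : IsInvariantSystem Px A PL ρ) (hA : A' ∪ A'' = A)
    (hbdry : ∀ a ∈ A'', maxFlux PL ρ A'' (interior Γ) ≤ ρ a →
      ⨆ y ∈ interior Γ, PL a y = ⨆ y ∈ closure Γ, PL a y)
    (hgt : maxFlux PL ρ A' (closure Γᶜ) < maxFlux PL ρ A'' (interior Γ)) (hx : x ∈ frontier Γ)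
    (hρx : ρ x = maxFlux PL ρ A'' (interior Γ)) :
    ∃ a ∈ A'', PL a x = ⨆ y ∈ closure Γ, PL a y ∧ ρ x = ρ a * PL a x := by
  rw [frontier_eq_closure_inter_closure] at hx
  obtain ⟨a, ha, hax⟩ := h.exists_mem_le_mul_lim_of_maxFlux_lt hA hx.2 (hgt.trans_eq hρx.symm)
  have heq : ρ x = ρ a * PL a x := hax.antisymm (h.mul_lim_le a x)
  have hpos : 0 < ρ a * PL a x := heq ▸ hρx ▸
    h.maxFlux_nonneg.trans_lt hgt
  refine ⟨a, ha, (biSup_eq_of_isMaxOn hx.1 (h.lim_nonneg a x)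
    fun y hy => ?_).symm, heq⟩
  refine le_of_mul_le_mul_left ?_ (pos_of_mul_pos_left hpos (h.lim_nonneg a x))
  rw [← heq, hρx]
  exact h.mul_lim_le_maxFlux_interior ha (hbdry a ha) hy

theorem maxFlux_interior_compl_eq (h : IsInvariantSystem Px A PL ρ) (hΓ'' : A'' ⊆ interior Γᶜ)
    (hfr : ∀ z ∈ frontier Γ, ρ z ≤ maxFlux PL ρ A'' (interior Γ)) :
    maxFlux PL ρ (interior Γᶜ) (interior Γ) = maxFlux PL ρ A'' (interior Γ) := by
  refine le_antisymm (maxFlux_le h.devρ.nonneg h.maxFlux_nonneg fun x hx y hy => ?_)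
    (maxFlux_le h.devρ.nonneg h.maxFlux_nonneg fun x hx y hy => h.mul_lim_le_maxFlux (hΓ'' hx) hy)
  refine h.mul_lim_le_of_forall_frontier_le (G := Γᶜ) h.maxFlux_nonneg ?_
    (interior_subset_closure hx) ?_
  · rwa [frontier_compl]
  · rw [compl_compl]
    exact interior_subset_closure hy

theorem maxFlux_closure_eq (h : IsInvariantSystem Px A PL ρ) (hx : x ∈ frontier Γ)
    (ha : a ∈ closure Γᶜ) (hxa : PL x a = 1) (hmax : IsMaxOn ρ (frontier Γ) x) :
    maxFlux PL ρ (closure Γ) (closure Γᶜ) = ρ x := by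
  refine le_antisymm (maxFlux_le h.devρ.nonneg (h.devρ.nonneg x) fun x' hx' y hy =>
    h.mul_lim_le_of_forall_frontier_le (h.devρ.nonneg x) hmax hx' hy) ?_
  simpa only [hxa, mul_one] using h.mul_lim_le_maxFlux (frontier_subset_closure hx) ha

end IsInvariantSystem

theorem stmt11_general {Px : E → C(ℝ≥0, E) → ℝ} {A A' A'' Γ : Set E} {PL : E → E → ℝ} {ρ : E → ℝ}
    (h : IsInvariantSystem Px A PL ρ) (hA : A' ∪ A'' = A) (hΓ'' : A'' ⊆ interior Γᶜ)
    (hbdry : ∀ a ∈ A'', maxFlux PL ρ A'' (interior Γ) ≤ ρ a →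
      ⨆ y ∈ interior Γ, PL a y = ⨆ y ∈ closure Γ, PL a y)
    (hgt : maxFlux PL ρ A' (closure Γᶜ) < maxFlux PL ρ A'' (interior Γ)) :
    ∃ xh ∈ frontier Γ, ∃ atil ∈ A'', ∃ ahat ∈ A'',
      PL xh atil = 1 ∧
      PL ahat xh = (⨆ y ∈ closure Γ, PL ahat y) ∧
      ρ xh = ρ ahat * PL ahat xh ∧
      ρ xh = maxFlux PL ρ A'' (interior Γ) ∧
      ρ xh = maxFlux PL ρ (interior Γᶜ) (interior Γ) ∧
      ρ xh = maxFlux PL ρ (closure Γ) (closure Γᶜ) ∧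
      ρ xh = ⨆ y ∈ frontier Γ, ρ y := by
  have hfr : ∀ z ∈ frontier Γ, ρ z ≤ maxFlux PL ρ A'' (interior Γ) := fun z =>
    h.le_maxFlux_of_mem_frontier hA hbdry hgt
  obtain ⟨x, hx, hρx, a, ha, hxa⟩ := h.exists_mem_frontier_eq_maxFlux hA hΓ'' hgt hfr
  obtain ⟨a', ha', hsup, hflux⟩ := h.exists_mem_eq_mul_lim hA hbdry hgt hx hρx
  have hmax : IsMaxOn ρ (frontier Γ) x := fun z hz => (hfr z hz).trans hρx.ge
  exact ⟨x, hx, a, ha, a', ha', hxa, hsup, hflux, hρx,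
    hρx.trans (h.maxFlux_interior_compl_eq hΓ'' hfr).symm,
    (h.maxFlux_closure_eq hx (interior_subset_closure (hΓ'' ha)) hxa hmax).symm,
    (biSup_eq_of_isMaxOn hx (h.devρ.nonneg x) hmax).symm⟩

end Markov

theorem kernel_invariant_of_forall_measurableSet {α : Type*} [MeasurableSpace α]
    {κ : ProbabilityTheory.Kernel α α} {μ : Measure α}
    (h : ∀ s, MeasurableSet s → μ s = ∫⁻ x, κ x s ∂μ) : κ.Invariant μ :=
  Measure.ext fun s hs => (Measure.bind_apply hs κ.aemeasurable).trans (h s hs).symm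

theorem DevSetup.isInvariantSystem {E : Type*} [MetricSpace E] [MeasurableSpace E] [BorelSpace E]
    {Px : E → C(ℝ≥0, E) → ℝ} {A : Set E} {PL : E → E → ℝ} {ρ : E → ℝ}
    {κ : ℕ → ℝ≥0 → ProbabilityTheory.Kernel E E}
    [∀ n t, ProbabilityTheory.IsMarkovKernel (κ n t)] {μ : ℕ → Measure E}
    [∀ k, IsProbabilityMeasure (μ k)] {rate : ℕ → ℕ} (hyp : DevSetup E Px A)
    (hPL : IsLimitTransDen Px PL)
    (hκ : ∀ t x xs, Tendsto xs atTop (𝓝 x) →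
      LDConv (fun n => κ n t (xs n)) (fun n => n) (fun y => transDen Px x t y))
    (hrate : Tendsto rate atTop atTop) (hρ : IsDeviabilityDensity ρ) (hμ : LDConv μ rate ρ)
    (hinv : ∀ k t, (κ (rate k) t).Invariant (μ k)) : IsInvariantSystem Px A PL ρ :=
  { hyp.isAttractingSystem with
    lim := hPL
    devρ := hρ
    inv := fun t => IsLDLimitKernel.isInvariantDensity (κ := fun n => κ n t)
      ⟨fun x => hyp.isAttractingSystem.isDeviabilityDensity_transDen x t, hκ t⟩ hrate hρ hμ
      fun k => hinv k t }

theorem stmt11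
    (Px : S → C(ℝ≥0, S) → ℝ) (A : Set S) (hyp : DevSetup S Px A)
    (PL : S → S → ℝ)
    (hPL : ∀ x y : S, Tendsto (fun t : ℝ≥0 => transDen Px x t y) atTop (𝓝 (PL x y)))
    (κ : ℕ → ℝ≥0 → ProbabilityTheory.Kernel S S)
    (hκ : ∀ n t, ProbabilityTheory.IsMarkovKernel (κ n t))
    (P : ℕ → Measure S) (hP : ∀ n, IsProbabilityMeasure (P n))
    (hinv : ∀ n (t : ℝ≥0) (Γ : Set S), MeasurableSet Γ →
      P n Γ = ∫⁻ x, κ n t x Γ ∂(P n))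
    (hκLD : ∀ (t : ℝ≥0) (x : S) (xs : ℕ → S), Tendsto xs atTop (𝓝 x) →
      LDConv (fun n => κ n t (xs n)) (fun n => n) (fun y => transDen Px x t y))
    (ρ : S → ℝ) (hρdev : IsDeviabilityDensity ρ)
    (φ : ℕ → ℕ) (hφ : StrictMono φ)
    (hρ : LDConv (fun k => P (φ k)) φ ρ)
    (A' A'' : Set S) (hA'ne : A'.Nonempty) (hA''ne : A''.Nonempty)
    (hdisj : Disjoint A' A'') (huni : A' ∪ A'' = A)
    (Γ : Set S) (hΓ' : A' ⊆ interior Γ) (hΓ'' : A'' ⊆ interior Γᶜ)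
    (hbdry : ∀ a ∈ A'', maxFlux PL ρ A'' (interior Γ) ≤ ρ a →
      (⨆ y ∈ interior Γ, PL a y) = ⨆ y ∈ closure Γ, PL a y)
    (hgt : maxFlux PL ρ A' (closure Γᶜ) < maxFlux PL ρ A'' (interior Γ)) :
    ∃ xh ∈ frontier Γ, ∃ atil ∈ A'', ∃ ahat ∈ A'',
      PL xh atil = 1 ∧
      PL ahat xh = (⨆ y ∈ closure Γ, PL ahat y) ∧
      ρ xh = ρ ahat * PL ahat xh ∧
      ρ xh = maxFlux PL ρ A'' (interior Γ) ∧
      ρ xh = maxFlux PL ρ (interior Γᶜ) (interior Γ) ∧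
      ρ xh = maxFlux PL ρ (closure Γ) (closure Γᶜ) ∧
      ρ xh = ⨆ y ∈ frontier Γ, ρ y := by
  exact stmt11_general (DevSetup.isInvariantSystem hyp hPL hκLD hφ.tendsto_atTop hρdev hρ fun k t =>
    kernel_invariant_of_forall_measurableSet (hinv (φ k) t)) huni hΓ'' hbdry hgt
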